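/- arXiv:1010.0379 — 6 statements merged into one kernel-verified Lean document; each statement's English description precedes it below -/
import Mathlib

section
/- Let T be a mass–momentum field on flat Newtonian spacetime satisfying the conservation condition and having slab-compact support. Then the momentum is conserved: for every index b ∈ {0,1,2,3} and all times t₁, t₂ ∈ ℝ, P^b(t₁) = P^b(t₂). -/
/-!
Since `T` vanishes outside a set whose slices over a compact time interval lie in one fixed compact
subset of space, differentiation under the integral sign is permitted (`hasDerivAt_slice`), and
`dP^b/dt = ∫ ∂₀T^{0b} = -∑ᵢ ∫ ∂ᵢT^{ib}` by the conservation condition. Each integral on the right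
is that of a spatial derivative of a compactly supported function, hence zero (`integral_spatial`).
So `P^b` has zero derivative everywhere and is constant.
-/

open MeasureTheory

noncomputable section

/-- Flat Newtonian spacetime ℝ⁴, coordinates x⁰,…,x³ with x⁰ time. -/
abbrev Spacetime : Type := Fin 4 → ℝ

/-- Space ℝ³. -/
abbrev Space : Type := Fin 3 → ℝ

/-- The spacetime point with time `t` and spatial part `x`. -/
def pt (t : ℝ) (x : Space) : Spacetime := Fin.cons t x

/-- A mass–momentum field: smooth and symmetric. -/
def IsMassMomentum (T : Spacetime → Fin 4 → Fin 4 → ℝ) : Prop :=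
  (∀ a b : Fin 4, ContDiff ℝ (⊤ : ℕ∞) fun p => T p a b) ∧
  (∀ p : Spacetime, ∀ a b : Fin 4, T p a b = T p b a)

/-- The conservation condition: ∑ₐ ∂ₐ T^{ab} = 0 everywhere. -/
def ConservationCond (T : Spacetime → Fin 4 → Fin 4 → ℝ) : Prop :=
  ∀ (p : Spacetime) (b : Fin 4),
    ∑ a : Fin 4, fderiv ℝ (fun q => T q a b) p (Pi.single a 1) = 0

/-- Slab-compact support: supp T ∩ (K × ℝ³) is compact for compact K ⊆ ℝ. -/
def SlabCompact (T : Spacetime → Fin 4 → Fin 4 → ℝ) : Prop :=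
  ∀ K : Set ℝ, IsCompact K → IsCompact (tsupport T ∩ {p : Spacetime | p 0 ∈ K})

/-- The momentum at time `t`: P^b(t) = ∫_{ℝ³} T^{0b}(t,x) dx. -/
def momentum (T : Spacetime → Fin 4 → Fin 4 → ℝ) (t : ℝ) (b : Fin 4) : ℝ :=
  ∫ x : Space, T (pt t x) 0 b


/-- Slab-compact support, for a single scalar component. -/
def ScalarSlabCompact (f : Spacetime → ℝ) : Prop :=
  ∀ K : Set ℝ, IsCompact K → IsCompact (tsupport f ∩ {p : Spacetime | p 0 ∈ K})

/-- Slab-compactness passes from `g`, which may be the matrix field itself, to any scalar function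
supported inside it, such as a component or one of its partial derivatives. -/
lemma ScalarSlabCompact.mono {F : Type*} [Zero F] {g : Spacetime → F} {f : Spacetime → ℝ}
    (hg : ∀ K : Set ℝ, IsCompact K → IsCompact (tsupport g ∩ {p : Spacetime | p 0 ∈ K}))
    (h : tsupport f ⊆ tsupport g) : ScalarSlabCompact f := by
  intro K hK
  refine (hg K hK).of_isClosed_subset ?_ (Set.inter_subset_inter_left _ h)
  exact (isClosed_tsupport f).inter (hK.isClosed.preimage (continuous_apply 0))

lemma continuous_pt (t : ℝ) : Continuous (pt t) := by
  refine continuous_pi fun i => ?_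
  refine Fin.cases ?_ (fun j => ?_) i
  · exact continuous_const
  · exact continuous_apply j

lemma hasDerivAt_pt (t : ℝ) (x : Space) :
    HasDerivAt (fun s => pt s x) (Pi.single 0 1 : Spacetime) t := by
  refine hasDerivAt_pi.2 fun i => ?_
  refine Fin.cases ?_ (fun j => ?_) i
  · simpa [pt] using hasDerivAt_id' t
  · simpa [pt] using hasDerivAt_const t (x j)

lemma pt_add_smul (t τ : ℝ) (x : Space) (i : Fin 3) :
    pt t (x + τ • Pi.single i 1) = pt t x + τ • (Pi.single i.succ 1 : Spacetime) := by
  funext k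
  refine Fin.cases ?_ (fun j => ?_) k
  · simp [pt]
  · simp [pt, Pi.single_apply]

/-- A single compact subset of space carries all the slices of `f` over a compact set of times. -/
lemma exists_compact_slices {f : Spacetime → ℝ} (hf : ScalarSlabCompact f) {I : Set ℝ}
    (hI : IsCompact I) :
    ∃ K : Set Space, IsCompact K ∧ ∀ s ∈ I, ∀ x ∉ K, f (pt s x) = 0 := by
  refine ⟨(fun p : Spacetime => fun j : Fin 3 => p j.succ) '' (tsupport f ∩ {p | p 0 ∈ I}),
    (hf I hI).image (by fun_prop), fun s hs x hx => ?_⟩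
  by_contra h
  exact hx ⟨pt s x, ⟨subset_tsupport f h, hs⟩, rfl⟩

lemma integrable_slice {f : Spacetime → ℝ} (hc : Continuous f) (hf : ScalarSlabCompact f)
    (t : ℝ) : Integrable (fun x : Space => f (pt t x)) := by
  obtain ⟨K, hK, h0⟩ := exists_compact_slices hf (isCompact_singleton (x := t))
  exact (hc.comp (continuous_pt t)).integrable_of_hasCompactSupport
    (HasCompactSupport.intro hK fun x hx => h0 t rfl x hx)

lemma continuous_partial {f : Spacetime → ℝ} (hc : ContDiff ℝ 1 f) (v : Spacetime) :
    Continuous (fun p => fderiv ℝ f p v) :=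
  (hc.continuous_fderiv one_ne_zero).clm_apply continuous_const

lemma integral_spatial {f : Spacetime → ℝ} (hc : ContDiff ℝ 1 f) (hf : ScalarSlabCompact f)
    (t : ℝ) (i : Fin 3) :
    ∫ x : Space, fderiv ℝ f (pt t x) (Pi.single i.succ 1) = 0 := by
  have hInt := integrable_slice (continuous_partial hc (Pi.single i.succ 1))
    (ScalarSlabCompact.mono hf (tsupport_fderiv_apply_subset ℝ _)) t
  -- Integration by parts against the constant function `1`.
  have := integral_bilinear_hasLineDerivAt_right_eq_neg_left_of_integrable
    (μ := (volume : Measure Space)) (f := fun _ : Space => (1 : ℝ)) (f' := fun _ => 0)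
    (g := fun x => f (pt t x)) (g' := fun x => fderiv ℝ f (pt t x) (Pi.single i.succ 1))
    (v := Pi.single i 1) (B := ContinuousLinearMap.mul ℝ ℝ)
    (by simp) (by simpa using hInt) (by simpa using integrable_slice hc.continuous hf t)
    (fun x _ => hasDerivAt_const _ _)
    (fun x _ => by
      have h := ((hc.differentiable one_ne_zero) (pt t x)).hasFDerivAt.hasLineDerivAt
        (Pi.single i.succ 1)
      unfold HasLineDerivAt at h ⊢
      simpa only [pt_add_smul] using h)
  simpa using this

/-- Differentiation under the integral sign over a time slice. -/
lemma hasDerivAt_slice {f : Spacetime → ℝ} (hc : ContDiff ℝ 1 f) (hf : ScalarSlabCompact f)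
    (t : ℝ) :
    HasDerivAt (fun s => ∫ x : Space, f (pt s x))
      (∫ x : Space, fderiv ℝ f (pt t x) (Pi.single 0 1)) t := by
  have hc' := continuous_partial hc (Pi.single 0 1)
  have hf' : ScalarSlabCompact (fun p => fderiv ℝ f p (Pi.single 0 1)) :=
    ScalarSlabCompact.mono hf (tsupport_fderiv_apply_subset ℝ _)
  have hI : IsCompact (Set.Icc (t - 1) (t + 1)) := isCompact_Icc
  obtain ⟨K, hK, h0⟩ := exists_compact_slices hf' hI
  obtain ⟨C, hC⟩ := (hf' _ hI).exists_bound_of_continuousOn hc'.continuousOn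
  -- The derivative is dominated by a constant on `K` for all times in `[t - 1, t + 1]`.
  refine (hasDerivAt_integral_of_dominated_loc_of_deriv_le
    (s := Set.Icc (t - 1) (t + 1)) (F := fun s x => f (pt s x))
    (F' := fun s x => fderiv ℝ f (pt s x) (Pi.single 0 1))
    (bound := K.indicator fun _ => |C|)
    (Icc_mem_nhds (by linarith) (by linarith))
    (Filter.Eventually.of_forall fun s => (integrable_slice hc.continuous hf s).1)
    (integrable_slice hc.continuous hf t) (integrable_slice hc' hf' t).1
    (Filter.Eventually.of_forall fun x s hs => ?_) ?_
    (Filter.Eventually.of_forall fun x s _ => ?_)).2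
  · by_cases hx : x ∈ K
    · rw [Set.indicator_of_mem hx]
      by_cases hp : pt s x ∈ tsupport (fun p => fderiv ℝ f p (Pi.single 0 1))
      · exact (hC _ ⟨hp, hs⟩).trans (le_abs_self C)
      · have := image_eq_zero_of_notMem_tsupport hp
        rw [this, norm_zero]
        exact abs_nonneg C
    · rw [Set.indicator_of_notMem hx, h0 s hs x hx, norm_zero]
  · exact (integrable_indicator_iff hK.measurableSet).2
      (integrableOn_const hK.measure_lt_top.ne)
  · exact ((hc.differentiable one_ne_zero) (pt s x)).hasFDerivAt.comp_hasDerivAt s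
      (hasDerivAt_pt s x)

/-- Conservation of momentum. -/
theorem momentum_conserved (T : Spacetime → Fin 4 → Fin 4 → ℝ)
    (hT : IsMassMomentum T) (hcons : ConservationCond T) (hsupp : SlabCompact T) :
    ∀ (b : Fin 4) (t₁ t₂ : ℝ), momentum T t₁ b = momentum T t₂ b := by
  intro b
  have hc (a : Fin 4) : ContDiff ℝ 1 (fun p => T p a b) :=
    (hT.1 a b).of_le (by exact_mod_cast le_top)
  have hf (a : Fin 4) : ScalarSlabCompact (fun p => T p a b) := by
    refine ScalarSlabCompact.mono hsupp (closure_mono fun p hp h0 => hp ?_)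
    simp [h0]
  have hzero (t : ℝ) :
      ∫ x : Space, fderiv ℝ (fun p => T p 0 b) (pt t x) (Pi.single 0 1) = 0 := by
    have hpt (x : Space) : fderiv ℝ (fun p => T p 0 b) (pt t x) (Pi.single 0 1) =
        -∑ i : Fin 3, fderiv ℝ (fun p => T p i.succ b) (pt t x) (Pi.single i.succ 1) := by
      have := hcons (pt t x) b
      rw [Fin.sum_univ_succ] at this
      linarith
    simp_rw [hpt]
    rw [integral_neg, integral_finsetSum _ fun i _ =>
      integrable_slice (continuous_partial (hc i.succ) (Pi.single i.succ 1))
        (ScalarSlabCompact.mono (hf i.succ) (tsupport_fderiv_apply_subset ℝ _)) t]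
    simp [integral_spatial (hc _) (hf _)]
  have hd (t : ℝ) : HasDerivAt (fun s => momentum T s b) 0 t := by
    simpa only [hzero, momentum] using hasDerivAt_slice (hc 0) (hf 0) t
  exact is_const_of_deriv_eq_zero (fun t => (hd t).differentiableAt) fun t => (hd t).deriv

end
end

section
/- Let T be a mass–momentum field on flat Newtonian spacetime satisfying the conservation condition, the mass condition, and having slab-compact support. If there exists a time t' ∈ ℝ such that T(t', x) = 0 for all x ∈ ℝ³ (i.e., the support of T misses the time slice x⁰ = t'), then T is identically zero on ℝ⁴. -/
/-! The total mass `∫ T⁰⁰(t, x) dx` does not depend on `t`: the divergence theorem is applied to the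
vector field `a ↦ T^{a0}` on a box `[s, t] × [-R, R]³` that contains the support of `T` over the
slab `[s, t]` in its spatial interior. The field is divergence-free and vanishes on the lateral
faces, so the integrals of `T⁰⁰` over the two remaining faces agree (`sliceMass_eq`). On the slice
`x⁰ = t'` the mass is zero; hence it is zero on every slice. As `T⁰⁰` is continuous and nonnegative,
it vanishes on every slice, and then the mass condition gives `T = 0`. -/

open MeasureTheory

noncomputable section

/-- The mass condition: at every point, either T = 0 or T⁰⁰ > 0. -/
def MassCond (T : Spacetime → Fin 4 → Fin 4 → ℝ) : Prop :=
  ∀ p : Spacetime, T p = 0 ∨ 0 < T p 0 0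

/-- Conservation of mass: if `T` vanishes on the lateral boundary of the box
`[s, t] × [-R, R]³`, the masses in its bottom and top faces agree. -/
lemma sliceMass_eq {T : Spacetime → Fin 4 → Fin 4 → ℝ} (hT : IsMassMomentum T)
    (hcons : ConservationCond T) {s t R : ℝ} (hst : s ≤ t) (hR : 0 ≤ R)
    (hlat : ∀ p : Spacetime, p 0 ∈ Set.Icc s t → (∃ i : Fin 3, |p i.succ| = R) → T p = 0) :
    ∫ x in Set.Icc (fun _ : Fin 3 => -R) (fun _ => R), T (pt s x) 0 0 =
      ∫ x in Set.Icc (fun _ : Fin 3 => -R) (fun _ => R), T (pt t x) 0 0 := by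
  have hdiff : ∀ a, Differentiable ℝ fun q => T q a 0 := fun a =>
    (hT.1 a 0).differentiable (by simp)
  have hle : (Fin.cons s (fun _ : Fin 3 => -R) : Fin 4 → ℝ) ≤ Fin.cons t (fun _ => R) := by
    intro i
    refine Fin.cases ?_ (fun j => ?_) i
    · simpa using hst
    · simp only [Fin.cons_succ]; linarith
  have hdiv := integral_divergence_of_hasFDerivAt_off_countable'
    (Fin.cons s (fun _ : Fin 3 => -R) : Fin 4 → ℝ) (Fin.cons t (fun _ => R)) hle
    (fun a q => T q a 0) (fun a q => fderiv ℝ (fun q => T q a 0) q) ∅ Set.countable_empty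
    (fun a => (hdiff a).continuous.continuousOn) (fun x _ a => (hdiff a x).hasFDerivAt)
    (by simp only [hcons _ 0]; exact integrableOn_zero)
  simp only [hcons _ 0, integral_zero] at hdiv
  rw [Fin.sum_univ_succ] at hdiv
  -- a lateral face lies in the slab `[s, t]` and has one spatial coordinate equal to `±R`
  have hface : ∀ (i : Fin 3) (c : ℝ), |c| = R →
      ∫ x in Set.Icc ((Fin.cons s (fun _ : Fin 3 => -R) : Fin 4 → ℝ) ∘ i.succ.succAbove)
        ((Fin.cons t (fun _ => R) : Fin 4 → ℝ) ∘ i.succ.succAbove),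
        T (i.succ.insertNth c x : Fin 4 → ℝ) i.succ 0 = 0 := by
    intro i c hc
    refine setIntegral_eq_zero_of_forall_eq_zero fun x hx => ?_
    rw [hlat _ ?_ ⟨i, by simpa using hc⟩]
    · rfl
    · have h0 : (i.succ.succAbove 0 : Fin 4) = 0 := Fin.succ_succAbove_zero i
      have key : (i.succ.insertNth c x : Fin 4 → ℝ) 0 = x 0 := by
        rw [← h0, Fin.insertNth_apply_succAbove]
      have h1 := hx.1 0
      have h2 := hx.2 0
      simp only [Function.comp_apply, h0, Fin.cons_zero] at h1 h2
      rw [key]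
      exact ⟨h1, h2⟩
  rw [Finset.sum_eq_zero (s := Finset.univ) (fun i _ => by
    simp only [Fin.cons_succ]
    rw [hface i R (abs_of_nonneg hR), hface i (-R) (by rw [abs_neg, abs_of_nonneg hR]),
      sub_zero])] at hdiv
  have hcomp : ∀ (u r : ℝ), ((Fin.cons u (fun _ : Fin 3 => r) : Fin 4 → ℝ) ∘
      (0 : Fin 4).succAbove) = fun _ => r := by
    intro u r; ext j; simp
  simp only [hcomp, Fin.cons_zero, Fin.insertNth_zero', add_zero] at hdiv
  exact (sub_eq_zero.1 hdiv.symm).symm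

/-- If the support of a conserved mass–momentum field misses an entire time slice,
then the field vanishes identically. -/
theorem eq_zero_of_vanishing_slice (T : Spacetime → Fin 4 → Fin 4 → ℝ)
    (hT : IsMassMomentum T) (hcons : ConservationCond T) (hmass : MassCond T)
    (hsupp : SlabCompact T) (t' : ℝ) (hslice : ∀ x : Space, T (pt t' x) = 0) :
    ∀ p : Spacetime, T p = 0 := by
  intro p
  -- the spatial cube contains `p` and the support over the slab between `t'` and `p 0`
  obtain ⟨R₀, hR₀⟩ := (hsupp (Set.uIcc t' (p 0)) isCompact_uIcc).isBounded.exists_norm_le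
  set R := max R₀ ‖p‖ + 1 with hRdef
  have hR₁ : R₀ < R := by linarith [le_max_left R₀ ‖p‖]
  have hR₂ : ‖p‖ < R := by linarith [le_max_right R₀ ‖p‖]
  have hR : 0 ≤ R := (norm_nonneg p).trans hR₂.le
  have hlat : ∀ q : Spacetime, q 0 ∈ Set.uIcc t' (p 0) → (∃ i : Fin 3, |q i.succ| = R) →
      T q = 0 := by
    rintro q hq ⟨i, hi⟩
    by_contra hne
    have h1 := hR₀ q ⟨subset_tsupport T hne, hq⟩
    have h2 : |q i.succ| ≤ ‖q‖ := norm_le_pi_norm q i.succ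
    linarith
  have hmass0 : ∫ x in Set.Icc (fun _ : Fin 3 => -R) (fun _ => R), T (pt t' x) 0 0 = 0 := by
    simp [hslice]
  have hmass1 : ∫ x in Set.Icc (fun _ : Fin 3 => -R) (fun _ => R), T (pt (p 0) x) 0 0 = 0 := by
    rcases le_total t' (p 0) with h | h
    · rw [Set.uIcc_of_le h] at hlat
      rw [← sliceMass_eq hT hcons h hR hlat, hmass0]
    · rw [Set.uIcc_of_ge h] at hlat
      rw [sliceMass_eq hT hcons h hR hlat, hmass0]
  have hnonneg : ∀ q, 0 ≤ T q 0 0 := fun q => by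
    rcases hmass q with h | h
    · simp [h]
    · exact h.le
  have hpt : Continuous (pt (p 0)) := by
    unfold pt
    exact continuous_const.finCons continuous_id
  have hcont : Continuous fun x => T (pt (p 0) x) 0 0 := (hT.1 0 0).continuous.comp hpt
  have hae := (setIntegral_eq_zero_iff_of_nonneg_ae
    (Filter.Eventually.of_forall fun x => hnonneg (pt (p 0) x))
    hcont.integrableOn_Icc).1 hmass1
  have hball : Metric.ball (0 : Space) R ⊆ Set.Icc (fun _ => -R) (fun _ => R) := by
    intro x hx
    rw [mem_ball_zero_iff] at hx
    have h : ∀ i, |x i| ≤ R := fun i => (norm_le_pi_norm x i).trans hx.le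
    exact ⟨fun i => (abs_le.1 (h i)).1, fun i => (abs_le.1 (h i)).2⟩
  have hzero := Measure.eqOn_open_of_ae_eq (ae_restrict_of_ae_restrict_of_subset hball hae)
    Metric.isOpen_ball hcont.continuousOn continuousOn_const
  have hp : Fin.tail p ∈ Metric.ball (0 : Space) R := by
    rw [mem_ball_zero_iff]
    exact lt_of_le_of_lt
      ((pi_norm_le_iff_of_nonneg (norm_nonneg p)).2 fun i => norm_le_pi_norm p i.succ) hR₂
  have hp0 : T p 0 0 = 0 := by
    have h := hzero hp
    have hpp : pt (p 0) (Fin.tail p) = p := Fin.cons_self_tail p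
    simpa only [hpp, Pi.zero_apply] using h
  exact (hmass p).resolve_right (by simp [hp0])

end
end

section
/- Geodesic theorem in flat Newtonian spacetime: let I ⊆ ℝ be an open interval and γ : I → ℝ⁴ a smooth imbedded curve (γ is injective, its derivative γ' is nowhere zero, and γ is a topological embedding onto its image). Suppose that for every open set O ⊆ ℝ⁴ with γ(I) ⊆ O there exists a mass–momentum field T such that: (1) T satisfies the mass condition; (2) T satisfies the conservation condition; (3) T has slab-compact support and supp T ⊆ O; and (4) T ≠ 0 at at least one point of O. Then γ is a timelike curve that can be reparametrized as a geodesic: the time component of its derivative, (γ')⁰(s), is nonzero for every s ∈ I, and there exist p, v ∈ ℝ⁴ with v⁰ ≠ 0 such that γ(I) ⊆ {p + s·v : s ∈ ℝ}, i.e., the image of γ lies on an affine line of ℝ⁴ with timelike direction. -/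
/-!
The proof uses conservation of mass and momentum only through integrals against test functions
(`weak_conservation`), and has two parts.

*Matter cannot end* (`kill`). If from some time on the support of `T` splits into two disjoint open
parts and one of them disappears later, testing the conservation of mass with the square of a
truncated time function on that part shows that it was empty; the same holds backwards in time. For
a curve that can be followed by matter this excludes that the time along the curve first increases
and then decreases, or conversely (`no_dent`): in a thin tube around the curve (`exists_tube`) the
matter near the peak would have no future, so the tube is cut there, and each half of the cut tube
would be empty of matter (`half_kill`). Hence the time is monotone along the curve, and it is
unbounded in both directions (`time_unbounded`).

*The centre of mass moves affinely* (`window_moments`). The mass seen through a tent-shaped time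
window does not depend on the position of the window, and its first moments depend affinely on that
position. If all matter is close to the curve, then during short time windows its centre of mass is
close to a point of the curve, provided that the curve itself stays near that point during the
window. This is so near the end points of the level sets of the time (`exists_window`), and shrinking
the windows gives an exact collinearity relation among such points (`collinear_levelEnds`). Applied
to the two end points of one level set and a point at a later time, it shows that the end points
agree; so the time is injective along the curve, every point is an end point of its level set, and
the whole curve lies on one line (`line_of_monotone`). Since the derivative of the curve does not
vanish, neither does its time component.
-/

open MeasureTheory

noncomputable section

/-! ### Conservation against test functions -/

/-- A matter field: a mass–momentum field with the mass condition, the conservation condition and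
slab-compact support. It may vanish identically. -/
structure GoodField (T : Spacetime → Fin 4 → Fin 4 → ℝ) : Prop where
  isMassMomentum : IsMassMomentum T
  mass : MassCond T
  conserved : ConservationCond T
  slab : SlabCompact T

lemma integral_fderiv_eq_zero_of_compact {S : Spacetime → ℝ} (hS : ContDiff ℝ 1 S)
    (hc : HasCompactSupport S) (v : Spacetime) : ∫ p, fderiv ℝ S p v = 0 := by
  have hcont : Continuous fun p => fderiv ℝ S p v :=
    (hS.continuous_fderiv one_ne_zero).clm_apply continuous_const
  have h := integral_mul_fderiv_eq_neg_fderiv_mul_of_integrable (𝕜 := ℝ)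
    (μ := (volume : Measure Spacetime)) (f := fun _ => (1 : ℝ)) (g := S) (v := v)
    (by simp)
    (by simpa using hcont.integrable_of_hasCompactSupport (hc.fderiv_apply (𝕜 := ℝ) v))
    (by simpa using hS.continuous.integrable_of_hasCompactSupport hc)
    (fun _ _ => differentiableAt_const _)
    (fun x _ => hS.differentiable one_ne_zero x)
  simpa using h

/-- Weak form of the conservation law. The test function `f` only has to be `C¹` near the support
of `T` and to vanish on the support outside a time slab, so it may jump between disjoint pieces of
the support. The integral is that of the divergence of the compactly supported `f • T`. -/
lemma weak_conservation {T : Spacetime → Fin 4 → Fin 4 → ℝ} (hT : GoodField T)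
    {f : Spacetime → ℝ} (hf : ∀ p ∈ tsupport T, ContDiffAt ℝ 1 f p) {R : ℝ}
    (hR : ∀ p ∈ tsupport T, R < |p 0| → f p = 0) (b : Fin 4) :
    Continuous (fun p => ∑ a, T p a b * fderiv ℝ f p (Pi.single a 1)) ∧
    HasCompactSupport (fun p => ∑ a, T p a b * fderiv ℝ f p (Pi.single a 1)) ∧
    ∫ p, ∑ a, T p a b * fderiv ℝ f p (Pi.single a 1) = 0 := by
  have hT1 : ∀ a b, ContDiff ℝ 1 fun p => T p a b := fun a b =>
    (hT.isMassMomentum.1 a b).of_le (by exact_mod_cast le_top)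
  have hT0 : ∀ p ∉ tsupport T, ∀ a b, (fun q => T q a b) =ᶠ[nhds p] fun _ => 0 := by
    intro p hp a b
    filter_upwards [notMem_tsupport_iff_eventuallyEq.1 hp] with q hq
    simp [hq]
  have hS0 : ∀ p ∉ tsupport T, ∀ a b, (fun q => T q a b * f q) =ᶠ[nhds p] fun _ => 0 := by
    intro p hp a b
    filter_upwards [hT0 p hp a b] with q hq
    simp [hq]
  have hS1 : ∀ a, ContDiff ℝ 1 fun p => T p a b * f p := by
    intro a
    rw [contDiff_iff_contDiffAt]
    intro p
    by_cases hp : p ∈ tsupport T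
    · exact (hT1 a b).contDiffAt.mul (hf p hp)
    · exact contDiffAt_const.congr_of_eventuallyEq (hS0 p hp a b)
  have hSc : ∀ a, HasCompactSupport fun p => T p a b * f p := by
    intro a
    refine HasCompactSupport.intro (hT.slab (Set.Icc (-R) R) isCompact_Icc) ?_
    intro p hp
    by_cases hpt : p ∈ tsupport T
    · have : f p = 0 := hR p hpt (by
        by_contra h
        exact hp ⟨hpt, abs_le.1 (not_lt.1 h)⟩)
      simp [this]
    · simp [image_eq_zero_of_notMem_tsupport hpt]
  have hkey : (fun p => ∑ a, T p a b * fderiv ℝ f p (Pi.single a 1)) =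
      fun p => ∑ a, fderiv ℝ (fun q => T q a b * f q) p (Pi.single a 1) := by
    funext p
    by_cases hp : p ∈ tsupport T
    · have hd : ∀ a, fderiv ℝ (fun q => T q a b * f q) p (Pi.single a 1) =
          T p a b * fderiv ℝ f p (Pi.single a 1) +
          f p * fderiv ℝ (fun q => T q a b) p (Pi.single a 1) := by
        intro a
        rw [fderiv_fun_mul ((hT1 a b).differentiable one_ne_zero p)
          ((hf p hp).differentiableAt one_ne_zero)]
        simp
      simp_rw [hd, Finset.sum_add_distrib, ← Finset.mul_sum, hT.conserved p b]
      simp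
    · refine Finset.sum_congr rfl fun a _ => ?_
      rw [(hS0 p hp a b).fderiv_eq]
      simp [image_eq_zero_of_notMem_tsupport hp]
  rw [hkey]
  refine ⟨?_, ?_, ?_⟩
  · exact continuous_finsetSum _ fun a _ =>
      ((hS1 a).continuous_fderiv one_ne_zero).clm_apply continuous_const
  · have : ∀ s : Finset (Fin 4), HasCompactSupport fun p =>
        ∑ a ∈ s, fderiv ℝ (fun q => T q a b * f q) p (Pi.single a 1) := by
      intro s
      induction s using Finset.induction_on with
      | empty => simpa using! (HasCompactSupport.zero : HasCompactSupport (0 : Spacetime → ℝ))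
      | insert a s ha ih =>
        simp_rw [Finset.sum_insert ha]
        exact ((hSc a).fderiv_apply (𝕜 := ℝ) _).add ih
    exact this _
  · rw [integral_finsetSum]
    · exact Finset.sum_eq_zero fun a _ => integral_fderiv_eq_zero_of_compact (hS1 a) (hSc a) _
    · exact fun a _ => (((hS1 a).continuous_fderiv one_ne_zero).clm_apply
        continuous_const).integrable_of_hasCompactSupport ((hSc a).fderiv_apply (𝕜 := ℝ) _)

/-- Powers `≥ 2` of the positive part are differentiable, also at `0`; all test functions of time
below are built from them. -/
lemma hasDerivAt_posPart_pow (n : ℕ) (t : ℝ) :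
    HasDerivAt (fun t : ℝ => (max t 0) ^ (n + 2)) ((n + 2 : ℕ) * (max t 0) ^ (n + 1)) t := by
  have hp : ∀ t : ℝ, HasDerivAt (fun t : ℝ => t ^ (n + 2)) ((n + 2 : ℕ) * t ^ (n + 1)) t :=
    fun t => by simpa using hasDerivAt_pow (n + 2) t
  rcases lt_trichotomy t 0 with h | h | h
  · rw [max_eq_right h.le]
    have : HasDerivAt (fun _ : ℝ => (0 : ℝ)) 0 t := hasDerivAt_const _ _
    simp only [ne_eq, Nat.add_eq_zero_iff, one_ne_zero, and_false, not_false_eq_true, zero_pow,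
      mul_zero]
    refine this.congr_of_eventuallyEq ?_
    filter_upwards [Iio_mem_nhds h] with s hs
    simp [max_eq_right (le_of_lt (show s < 0 from hs))]
  · subst h
    rw [← hasDerivWithinAt_univ, ← Set.Iic_union_Ici (a := (0 : ℝ))]
    refine HasDerivWithinAt.union ?_ ?_
    · simp only [max_self, ne_eq, Nat.add_eq_zero_iff, one_ne_zero, and_false, not_false_eq_true,
        zero_pow, mul_zero]
      refine (hasDerivWithinAt_const (0 : ℝ) (Set.Iic 0) (0 : ℝ)).congr ?_ (by simp)
      intro s hs
      simp [max_eq_right (show s ≤ 0 from hs)]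
    · simp only [max_self]
      refine (hp 0).hasDerivWithinAt.congr ?_ (by simp)
      intro s hs
      simp [max_eq_left (show 0 ≤ s from hs)]
  · rw [max_eq_left h.le]
    refine (hp t).congr_of_eventuallyEq ?_
    filter_upwards [Ioi_mem_nhds h] with s hs
    simp only [max_eq_left (le_of_lt (show 0 < s from hs))]

lemma hasFDerivAt_time {φ : ℝ → ℝ} {φ' : ℝ} {p : Spacetime} (h : HasDerivAt φ φ' (p 0)) :
    HasFDerivAt (fun q : Spacetime => φ (q 0))
      (φ' • (ContinuousLinearMap.proj 0 : Spacetime →L[ℝ] ℝ)) p :=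
  h.comp_hasFDerivAt p (hasFDerivAt_apply 0 p)

lemma contDiff_time {φ φ' : ℝ → ℝ} (h : ∀ t, HasDerivAt φ (φ' t) t) (hc : Continuous φ') :
    ContDiff ℝ 1 fun q : Spacetime => φ (q 0) := by
  have : ContDiff ℝ 1 φ := by
    rw [contDiff_one_iff_deriv]
    refine ⟨fun t => (h t).differentiableAt, ?_⟩
    rwa [show deriv φ = φ' from funext fun t => (h t).deriv]
  exact this.comp (contDiff_apply ℝ ℝ 0)

/-- Matter cannot end. If from time `c` on the support splits into disjoint open parts `U` and `V`,
and the part in `U` stops existing after time `d`, then there is no matter in `U` after time `c`: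
the test function `1_U · (τ t - c)₊²` gives a nonnegative integrand `2 T⁰⁰ (τ t - c)₊` on `U` with
integral zero. The sign `τ` covers both directions of time. -/
lemma kill {T : Spacetime → Fin 4 → Fin 4 → ℝ} (hT : GoodField T) {τ : ℝ}
    (hτ : τ = 1 ∨ τ = -1) {U V : Set Spacetime} (hU : IsOpen U) (hV : IsOpen V)
    (hd : Disjoint U V) {c d : ℝ} (hcov : ∀ p ∈ tsupport T, c ≤ τ * p 0 → p ∈ U ∪ V)
    (hb : ∀ p ∈ U, p ∈ tsupport T → τ * p 0 ≤ d) :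
    ∀ p ∈ U, c < τ * p 0 → T p = 0 := by
  have habs : ∀ t, |τ * t| = |t| := by
    intro t; rcases hτ with rfl | rfl <;> simp
  set φ : ℝ → ℝ := fun t => (max (τ * t - c) 0) ^ (0 + 2) with hφ
  set φ' : ℝ → ℝ := fun t => 2 * max (τ * t - c) 0 * τ with hφ'
  have hder : ∀ t, HasDerivAt φ (φ' t) t := by
    intro t
    have h1 : HasDerivAt (fun t => τ * t - c) τ t := by
      simpa using ((hasDerivAt_id t).const_mul τ).sub_const c
    have := (hasDerivAt_posPart_pow 0 (τ * t - c)).comp t h1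
    simpa [hφ, hφ', Function.comp_def] using this
  have hcd : ContDiff ℝ 1 fun q : Spacetime => φ (q 0) :=
    contDiff_time hder (by fun_prop)
  set f : Spacetime → ℝ := U.indicator fun q => φ (q 0) with hf
  have hfU : ∀ p ∈ U, f =ᶠ[nhds p] fun q => φ (q 0) := by
    intro p hp
    filter_upwards [hU.mem_nhds hp] with q hq
    simp [hf, hq]
  have hf0 : ∀ p ∈ tsupport T, p ∉ U → f =ᶠ[nhds p] fun _ => 0 := by
    intro p hp hpU
    by_cases hc : c ≤ τ * p 0
    · have hpV : p ∈ V := (hcov p hp hc).resolve_left hpU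
      filter_upwards [hV.mem_nhds hpV] with q hq
      have : q ∉ U := fun h => Set.disjoint_left.1 hd h hq
      simp [hf, this]
    · have ho : IsOpen {q : Spacetime | τ * q 0 < c} :=
        isOpen_lt (by fun_prop) continuous_const
      filter_upwards [ho.mem_nhds (not_le.1 hc)] with q hq
      have : max (τ * q 0 - c) 0 = 0 := max_eq_right (by simpa using (le_of_lt hq))
      by_cases h : q ∈ U <;> simp [hf, hφ, h, this]
  have hfcd : ∀ p ∈ tsupport T, ContDiffAt ℝ 1 f p := by
    intro p hp
    by_cases hpU : p ∈ U
    · exact hcd.contDiffAt.congr_of_eventuallyEq (hfU p hpU)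
    · exact contDiffAt_const.congr_of_eventuallyEq (hf0 p hp hpU)
  have hR : ∀ p ∈ tsupport T, |c| + |d| < |p 0| → f p = 0 := by
    intro p hp h
    by_cases hpU : p ∈ U
    · have h1 := hb p hpU hp
      have : τ * p 0 ≤ c := by
        by_contra h2
        rw [← habs (p 0)] at h
        have := abs_le.2 ⟨show -(|c| + |d|) ≤ τ * p 0 by
          linarith [neg_abs_le c, abs_nonneg d], show τ * p 0 ≤ |c| + |d| by
          linarith [le_abs_self d, abs_nonneg c]⟩
        linarith
      simp [hf, hpU, hφ, this]
    · simp [hf, hpU]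
  obtain ⟨hcont, hcs, hint⟩ := weak_conservation hT hfcd hR 0
  set D : Spacetime → ℝ := fun p => ∑ a, T p a 0 * fderiv ℝ f p (Pi.single a 1) with hD
  have hDU : ∀ p ∈ U, D p = T p 0 0 * φ' (p 0) := by
    intro p hp
    have h1 : fderiv ℝ f p = φ' (p 0) • (ContinuousLinearMap.proj 0 : Spacetime →L[ℝ] ℝ) := by
      rw [(hfU p hp).fderiv_eq, (hasFDerivAt_time (hder (p 0))).fderiv]
    simp [hD, h1, Fin.sum_univ_four]
  have hDn : ∀ p ∉ U, D p = 0 := by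
    intro p hp
    by_cases hpt : p ∈ tsupport T
    · simp [hD, (hf0 p hpt hp).fderiv_eq]
    · simp [hD, image_eq_zero_of_notMem_tsupport hpt]
  have h00 : ∀ p, 0 ≤ T p 0 0 := by
    intro p
    rcases hT.mass p with h | h
    · simp [h]
    · exact h.le
  have hττ : τ * τ = 1 := by rcases hτ with rfl | rfl <;> norm_num
  have hnn : 0 ≤ fun p => τ * D p := by
    intro p
    by_cases hp : p ∈ U
    · have : τ * D p = T p 0 0 * (2 * max (τ * p 0 - c) 0) := by
        rw [hDU p hp, hφ']
        linear_combination (T p 0 0 * (2 * max (τ * p 0 - c) 0)) * hττ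
      simp only [Pi.zero_apply, this]
      exact mul_nonneg (h00 p) (by positivity)
    · simp [hDn p hp]
  have hz : (fun p => τ * D p) = 0 := by
    have h1 : Continuous fun p => τ * D p := continuous_const.mul hcont
    have hi : Integrable fun p => τ * D p :=
      (hcont.integrable_of_hasCompactSupport hcs).const_mul τ
    have := (integral_eq_zero_iff_of_nonneg hnn hi).1 (by
      rw [integral_const_mul, hint, mul_zero])
    exact (h1.ae_eq_iff_eq volume continuous_zero).1 this
  intro p hp hc
  have h1 := congrFun hz p
  have h2 : τ * D p = T p 0 0 * (2 * max (τ * p 0 - c) 0) := by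
    rw [hDU p hp, hφ']
    linear_combination (T p 0 0 * (2 * max (τ * p 0 - c) 0)) * hττ
  rcases hT.mass p with h | h
  · exact h
  · exfalso
    have : 0 < T p 0 0 * (2 * max (τ * p 0 - c) 0) :=
      mul_pos h (mul_pos two_pos (lt_max_of_lt_left (by linarith)))
    simp only [Pi.zero_apply] at h1
    linarith


/-! ### Mass and centre of mass in time windows -/

/-- The mass density is orthogonal to every function of time with a compactly supported
primitive. -/
lemma integral_mass_eq_zero {T : Spacetime → Fin 4 → Fin 4 → ℝ} (hT : GoodField T)
    {φ g : ℝ → ℝ} (hφ : ∀ t, HasDerivAt φ (g t) t) (hg : Continuous g) {R : ℝ}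
    (hφR : ∀ t, R < |t| → φ t = 0) : ∫ p, g (p 0) * T p 0 0 = 0 := by
  have h := (weak_conservation hT (f := fun q => φ (q 0))
    (fun p _ => (contDiff_time hφ hg).contDiffAt) (fun p _ h => hφR _ h) 0).2.2
  rw [← h]
  congr 1
  funext p
  simp [(hasFDerivAt_time (hφ (p 0))).fderiv, Fin.sum_univ_four, mul_comm]

/-- The first spatial moments of the mass are orthogonal to every function of time with a compactly
supported second primitive: testing with `φ(t) xⁱ` turns the moment into the momentum
`∫ φ(t) T^{i0}`, which testing with `χ(t)`, `χ' = φ`, shows to be zero. -/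
lemma integral_moment_eq_zero {T : Spacetime → Fin 4 → Fin 4 → ℝ} (hT : GoodField T)
    {χ φ g : ℝ → ℝ} (hχ : ∀ t, HasDerivAt χ (φ t) t) (hφ : ∀ t, HasDerivAt φ (g t) t)
    (hg : Continuous g) {R : ℝ} (hχR : ∀ t, R < |t| → χ t = 0)
    (hφR : ∀ t, R < |t| → φ t = 0) {i : Fin 4} (hi : i ≠ 0) :
    ∫ p, g (p 0) * p i * T p 0 0 = 0 := by
  have hφc : Continuous φ := continuous_iff_continuousAt.2 fun t => (hφ t).continuousAt
  obtain ⟨c1, s1, h1⟩ := weak_conservation hT (f := fun q => χ (q 0))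
    (fun p _ => (contDiff_time hχ hφc).contDiffAt) (fun p _ h => hχR _ h) i
  obtain ⟨c2, s2, h2⟩ := weak_conservation hT (R := R) (f := fun q => φ (q 0) * q i)
    (fun p _ => ((contDiff_time hφ hg).mul (contDiff_apply ℝ ℝ i)).contDiffAt)
    (fun p _ h => by simp [hφR _ h]) 0
  have h3 := integral_sub (μ := volume) (c2.integrable_of_hasCompactSupport s2)
    (c1.integrable_of_hasCompactSupport s1)
  rw [h1, h2, sub_zero] at h3
  rw [← h3]
  congr 1
  funext p
  have e1 := (hasFDerivAt_time (hχ (p 0))).fderiv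
  have e2 := ((hasFDerivAt_time (hφ (p 0))).mul
    (hasFDerivAt_apply (𝕜 := ℝ) (F' := fun _ : Fin 4 => ℝ) i p)).fderiv
  have e2' : fderiv ℝ (fun q : Spacetime => φ (q 0) * q i) p = _ := e2
  have hs : T p i 0 = T p 0 i := hT.isMassMomentum.2 p i 0
  have hsum : ∀ a, T p a 0 * fderiv ℝ (fun q : Spacetime => φ (q 0) * q i) p (Pi.single a 1) =
      (if a = i then T p i 0 * φ (p 0) else 0) + (if a = 0 then g (p 0) * p i * T p 0 0 else 0) := by
    intro a
    rw [e2']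
    by_cases ha : a = i
    · subst ha
      simp [hi, mul_comm]
    · by_cases ha0 : a = 0
      · subst ha0
        simp [Ne.symm hi]
        ring
      · simp [ha, ha0, Ne.symm ha, Ne.symm ha0]
  simp_rw [hsum, e1, Finset.sum_add_distrib]
  simp [Fin.sum_univ_four, hs]

/-- The tent function supported on `[a, a + 2δ]`. -/
def tent (δ a t : ℝ) : ℝ :=
  max (t - a) 0 - 2 * max (t - a - δ) 0 + max (t - a - 2 * δ) 0

/-- The primitive of `tent δ a` that vanishes before `a`. -/
def tentPrim (δ a t : ℝ) : ℝ :=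
  ((max (t - a) 0) ^ 2 - 2 * (max (t - a - δ) 0) ^ 2 + (max (t - a - 2 * δ) 0) ^ 2) / 2

/-- The primitive of `tentPrim δ a` that vanishes before `a`. -/
def tentPrim₂ (δ a t : ℝ) : ℝ :=
  ((max (t - a) 0) ^ 3 - 2 * (max (t - a - δ) 0) ^ 3 + (max (t - a - 2 * δ) 0) ^ 3) / 6

lemma continuous_tent (δ a : ℝ) : Continuous (tent δ a) := by
  unfold tent; fun_prop

lemma hasDerivAt_posPart_pow_shift (n : ℕ) (b t : ℝ) :
    HasDerivAt (fun t : ℝ => (max (t - b) 0) ^ (n + 2))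
      ((n + 2 : ℕ) * (max (t - b) 0) ^ (n + 1)) t := by
  have := (hasDerivAt_posPart_pow n (t - b)).comp t ((hasDerivAt_id t).sub_const b)
  simpa [Function.comp_def] using this

lemma hasDerivAt_tentPrim (δ a t : ℝ) : HasDerivAt (tentPrim δ a) (tent δ a t) t := by
  have h := fun b => hasDerivAt_posPart_pow_shift 0 b t
  have := (((h a).sub ((h (a + δ)).const_mul 2)).add (h (a + 2 * δ))).div_const 2
  convert! this using 1
  · funext s
    simp [tentPrim, sub_sub]
  · simp [tent, sub_sub]
    ring

lemma hasDerivAt_tentPrim₂ (δ a t : ℝ) : HasDerivAt (tentPrim₂ δ a) (tentPrim δ a t) t := by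
  have h := fun b => hasDerivAt_posPart_pow_shift 1 b t
  have := (((h a).sub ((h (a + δ)).const_mul 2)).add (h (a + 2 * δ))).div_const 6
  convert! this using 1
  · funext s
    simp [tentPrim₂, sub_sub]
  · simp [tentPrim, sub_sub]
    ring

lemma tent_nonneg {δ : ℝ} (hδ : 0 < δ) (a t : ℝ) : 0 ≤ tent δ a t := by
  unfold tent
  rcases max_cases (t - a) 0 with h | h <;> rcases max_cases (t - a - δ) 0 with h' | h' <;>
    rcases max_cases (t - a - 2 * δ) 0 with h'' | h'' <;> linarith

lemma tent_eq_zero {δ : ℝ} (hδ : 0 < δ) {a t : ℝ} (ht : ¬(a ≤ t ∧ t ≤ a + 2 * δ)) :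
    tent δ a t = 0 := by
  unfold tent
  rcases not_and_or.1 ht with h | h
  · rw [max_eq_right, max_eq_right, max_eq_right] <;> linarith
  · rw [max_eq_left, max_eq_left, max_eq_left] <;> linarith

lemma tentPrim_left {δ : ℝ} (hδ : 0 < δ) {a t : ℝ} (ht : t ≤ a) :
    tentPrim δ a t = 0 ∧ tentPrim₂ δ a t = 0 := by
  unfold tentPrim tentPrim₂
  rw [max_eq_right (by linarith), max_eq_right (by linarith), max_eq_right (by linarith)]
  norm_num

lemma tentPrim_right {δ : ℝ} (hδ : 0 < δ) {a t : ℝ} (ht : a + 2 * δ ≤ t) :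
    tentPrim δ a t = δ ^ 2 ∧ tentPrim₂ δ a t = δ ^ 2 * (t - a - δ) := by
  unfold tentPrim tentPrim₂
  rw [max_eq_left (by linarith), max_eq_left (by linarith), max_eq_left (by linarith)]
  constructor <;> ring

section windows
variable {T : Spacetime → Fin 4 → Fin 4 → ℝ}

lemma integrable_time_mul (hT : GoodField T) {g : ℝ → ℝ} (hg : Continuous g) {R : ℝ}
    (hR : ∀ t, R < |t| → g t = 0) {u : Spacetime → ℝ} (hu : Continuous u) :
    Integrable fun p => g (p 0) * u p * T p 0 0 := by
  have hc : Continuous fun p => g (p 0) * u p * T p 0 0 :=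
    ((hg.comp (continuous_apply 0)).mul hu).mul (hT.isMassMomentum.1 0 0).continuous
  refine hc.integrable_of_hasCompactSupport
    (HasCompactSupport.intro (hT.slab (Set.Icc (-R) R) isCompact_Icc) ?_)
  intro p hp
  by_cases hpt : p ∈ tsupport T
  · have : g (p 0) = 0 := hR _ (by
      by_contra h
      exact hp ⟨hpt, abs_le.1 (not_lt.1 h)⟩)
    simp [this]
  · simp [image_eq_zero_of_notMem_tsupport hpt]

lemma tent_far {δ : ℝ} (hδ : 0 < δ) {a t : ℝ} (ht : |a| + 2 * δ < |t|) : tent δ a t = 0 := by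
  refine tent_eq_zero hδ fun h => ?_
  have := abs_le.2 ⟨show -(|a| + 2 * δ) ≤ t by linarith [neg_abs_le a],
    show t ≤ |a| + 2 * δ by linarith [le_abs_self a]⟩
  linarith

lemma far_cases {a R t : ℝ} {δ : ℝ} (ht : R < |t|) (ha : |a| + 2 * δ ≤ R) (hδ : 0 < δ) :
    (t < 0 → t ≤ a) ∧ (0 ≤ t → a + 2 * δ ≤ t) := by
  refine ⟨fun h => ?_, fun h => ?_⟩
  · rw [abs_of_neg h] at ht
    linarith [neg_abs_le a]
  · rw [abs_of_nonneg h] at ht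
    linarith [le_abs_self a]

/-- Conservation of mass: the mass seen by a window does not depend on its position. -/
lemma window_mass_eq (hT : GoodField T) {δ : ℝ} (hδ : 0 < δ) (a b : ℝ) :
    ∫ p, tent δ a (p 0) * T p 0 0 = ∫ p, tent δ b (p 0) * T p 0 0 := by
  have hi : ∀ a, Integrable fun p => tent δ a (p 0) * T p 0 0 := fun a => by
    simpa using integrable_time_mul hT (continuous_tent δ a) (fun t => tent_far hδ)
      (u := fun _ => 1) continuous_const
  have h := integral_mass_eq_zero hT (R := max (|a| + 2 * δ) (|b| + 2 * δ))
    (fun t => (hasDerivAt_tentPrim δ a t).sub (hasDerivAt_tentPrim δ b t))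
    ((continuous_tent δ a).sub (continuous_tent δ b)) (by
      intro t ht
      obtain ⟨a1, a2⟩ := far_cases ht (le_max_left _ _) hδ
      obtain ⟨b1, b2⟩ := far_cases ht (le_max_right _ _) hδ
      rcases lt_or_ge t 0 with h | h
      · simp [(tentPrim_left hδ (a1 h)).1, (tentPrim_left hδ (b1 h)).1]
      · simp [(tentPrim_right hδ (a2 h)).1, (tentPrim_right hδ (b2 h)).1])
  simp_rw [sub_mul] at h
  rw [integral_sub (hi a) (hi b)] at h
  linarith

lemma window_mass_pos (hT : GoodField T) {q : Spacetime} (hq : T q ≠ 0) {δ : ℝ} (hδ : 0 < δ)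
    (a : ℝ) : 0 < ∫ p, tent δ a (p 0) * T p 0 0 := by
  -- The window may be moved so that the peak of the tent is at the time of `q`.
  rw [window_mass_eq hT hδ a (q 0 - δ)]
  have hc : Continuous fun p => tent δ (q 0 - δ) (p 0) * T p 0 0 :=
    ((continuous_tent _ _).comp (continuous_apply 0)).mul (hT.isMassMomentum.1 0 0).continuous
  have h00 : ∀ p, 0 ≤ T p 0 0 := fun p => (hT.mass p).elim (fun h => by simp [h]) le_of_lt
  refine integral_pos_of_integrable_nonneg_nonzero (x := q) hc ?_ ?_ ?_
  · simpa using integrable_time_mul hT (continuous_tent δ (q 0 - δ)) (fun t => tent_far hδ)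
      (u := fun _ => 1) continuous_const
  · exact fun p => mul_nonneg (tent_nonneg hδ _ _) (h00 p)
  · have h1 : tent δ (q 0 - δ) (q 0) = δ := by
      unfold tent
      rw [max_eq_left (by linarith), max_eq_left (by linarith), max_eq_right (by linarith)]
      ring
    exact mul_ne_zero (by rw [h1]; exact hδ.ne') ((hT.mass q).resolve_left hq).ne'

/-- The centre of mass moves affinely in time. The coefficients annihilate affine functions of the
window position, and after all three windows `tentPrim₂ δ a t = δ² (t - a - δ)` is such a function,
so the second primitive of the combined weight has compact support. -/
lemma window_moments (hT : GoodField T) {δ : ℝ} (hδ : 0 < δ) (a b c : ℝ) {i : Fin 4}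
    (hi : i ≠ 0) :
    (c - b) * (∫ p, tent δ a (p 0) * p i * T p 0 0) +
      (a - c) * (∫ p, tent δ b (p 0) * p i * T p 0 0) +
      (b - a) * (∫ p, tent δ c (p 0) * p i * T p 0 0) = 0 := by
  have hint : ∀ a, Integrable fun p => tent δ a (p 0) * p i * T p 0 0 := fun a =>
    integrable_time_mul hT (continuous_tent δ a) (fun t => tent_far hδ) (continuous_apply i)
  have hlim : ∀ t, max (max (|a| + 2 * δ) (|b| + 2 * δ)) (|c| + 2 * δ) < |t| →
      (c - b) * tentPrim₂ δ a t + (a - c) * tentPrim₂ δ b t + (b - a) * tentPrim₂ δ c t = 0 ∧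
      (c - b) * tentPrim δ a t + (a - c) * tentPrim δ b t + (b - a) * tentPrim δ c t = 0 := by
    intro t ht
    obtain ⟨a1, a2⟩ := far_cases ht ((le_max_left _ _).trans (le_max_left _ _)) hδ
    obtain ⟨b1, b2⟩ := far_cases ht ((le_max_right _ _).trans (le_max_left _ _)) hδ
    obtain ⟨c1, c2⟩ := far_cases ht (le_max_right _ _) hδ
    rcases lt_or_ge t 0 with h | h
    · obtain ⟨a3, a4⟩ := tentPrim_left hδ (a1 h)
      obtain ⟨b3, b4⟩ := tentPrim_left hδ (b1 h)
      obtain ⟨c3, c4⟩ := tentPrim_left hδ (c1 h)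
      rw [a3, a4, b3, b4, c3, c4]
      constructor <;> ring
    · obtain ⟨a3, a4⟩ := tentPrim_right hδ (a2 h)
      obtain ⟨b3, b4⟩ := tentPrim_right hδ (b2 h)
      obtain ⟨c3, c4⟩ := tentPrim_right hδ (c2 h)
      rw [a3, a4, b3, b4, c3, c4]
      constructor <;> ring
  have h := integral_moment_eq_zero hT
    (χ := fun t => (c - b) * tentPrim₂ δ a t + (a - c) * tentPrim₂ δ b t +
      (b - a) * tentPrim₂ δ c t)
    (φ := fun t => (c - b) * tentPrim δ a t + (a - c) * tentPrim δ b t +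
      (b - a) * tentPrim δ c t)
    (g := fun t => (c - b) * tent δ a t + (a - c) * tent δ b t + (b - a) * tent δ c t)
    (fun t => (((hasDerivAt_tentPrim₂ δ a t).const_mul _).add
      ((hasDerivAt_tentPrim₂ δ b t).const_mul _)).add ((hasDerivAt_tentPrim₂ δ c t).const_mul _))
    (fun t => (((hasDerivAt_tentPrim δ a t).const_mul _).add
      ((hasDerivAt_tentPrim δ b t).const_mul _)).add ((hasDerivAt_tentPrim δ c t).const_mul _))
    (by
      have := continuous_tent δ
      fun_prop)
    (fun t ht => (hlim t ht).1) (fun t ht => (hlim t ht).2) hi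
  have e1 := integral_add ((hint a).const_mul (c - b)) ((hint b).const_mul (a - c))
  have e2 := integral_add (((hint a).const_mul (c - b)).add ((hint b).const_mul (a - c)))
    ((hint c).const_mul (b - a))
  simp only [Pi.add_apply] at e2
  rw [e1, integral_const_mul, integral_const_mul, integral_const_mul] at e2
  rw [← e2, ← h]
  congr 1
  funext p
  ring

/-- If all matter in a window is within `ε` of `X`, so is its centre of mass (in every
coordinate). -/
lemma window_center (hT : GoodField T) {δ : ℝ} (hδ : 0 < δ) {a ε : ℝ} {X : Spacetime}
    (hX : ∀ p ∈ tsupport T, a ≤ p 0 → p 0 ≤ a + 2 * δ → ‖p - X‖ ≤ ε) (i : Fin 4) :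
    |(∫ p, tent δ a (p 0) * p i * T p 0 0) - (∫ p, tent δ a (p 0) * T p 0 0) * X i| ≤
      ε * ∫ p, tent δ a (p 0) * T p 0 0 := by
  have h00 : ∀ p, 0 ≤ T p 0 0 := fun p => (hT.mass p).elim (fun h => by simp [h]) le_of_lt
  have hi : Integrable fun p => tent δ a (p 0) * T p 0 0 := by
    simpa using integrable_time_mul hT (continuous_tent δ a) (fun t => tent_far hδ)
      (u := fun _ => 1) continuous_const
  have hint := integrable_time_mul hT (continuous_tent δ a) (fun t => tent_far hδ)
      (continuous_apply i)
  rw [← integral_mul_const, ← integral_sub hint (hi.mul_const _), ← integral_const_mul,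
    ← Real.norm_eq_abs]
  refine norm_integral_le_of_norm_le (hi.const_mul ε) (Filter.Eventually.of_forall fun p => ?_)
  have e : tent δ a (p 0) * p i * T p 0 0 - tent δ a (p 0) * T p 0 0 * X i =
      (p i - X i) * (tent δ a (p 0) * T p 0 0) := by ring
  have hnn : 0 ≤ tent δ a (p 0) * T p 0 0 := mul_nonneg (tent_nonneg hδ _ _) (h00 p)
  rw [e, norm_mul, Real.norm_of_nonneg hnn]
  by_cases hp : p ∈ tsupport T
  · by_cases ht : a ≤ p 0 ∧ p 0 ≤ a + 2 * δ
    · exact mul_le_mul_of_nonneg_right ((norm_le_pi_norm (p - X) i).trans (hX p hp ht.1 ht.2)) hnn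
    · simp [tent_eq_zero hδ ht]
  · simp [image_eq_zero_of_notMem_tsupport hp]

/-- If the matter in the windows at times `a`, `b`, `c` is within `ε` of `X`, `Y`, `Z`
respectively, then `X`, `Y`, `Z` are collinear as functions of `a`, `b`, `c`, up to an error
proportional to `ε`. -/
lemma three_windows (hT : GoodField T) {q : Spacetime} (hq : T q ≠ 0) {δ : ℝ} (hδ : 0 < δ)
    {a b c ε : ℝ} {X Y Z : Spacetime}
    (hX : ∀ p ∈ tsupport T, a ≤ p 0 → p 0 ≤ a + 2 * δ → ‖p - X‖ ≤ ε)
    (hY : ∀ p ∈ tsupport T, b ≤ p 0 → p 0 ≤ b + 2 * δ → ‖p - Y‖ ≤ ε)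
    (hZ : ∀ p ∈ tsupport T, c ≤ p 0 → p 0 ≤ c + 2 * δ → ‖p - Z‖ ≤ ε) {i : Fin 4} (hi : i ≠ 0) :
    |(c - b) * X i + (a - c) * Y i + (b - a) * Z i| ≤ ε * (|c - b| + |a - c| + |b - a|) := by
  have hm := window_mass_pos hT hq hδ a
  have hA := window_center hT hδ hX i
  have hB := window_center hT hδ hY i
  have hC := window_center hT hδ hZ i
  rw [window_mass_eq hT hδ b a] at hB
  rw [window_mass_eq hT hδ c a] at hC
  have hmom := window_moments hT hδ a b c hi
  set m := ∫ p, tent δ a (p 0) * T p 0 0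
  set A := ∫ p, tent δ a (p 0) * p i * T p 0 0
  set B := ∫ p, tent δ b (p 0) * p i * T p 0 0
  set C := ∫ p, tent δ c (p 0) * p i * T p 0 0
  refine le_of_mul_le_mul_left ?_ hm
  calc m * |(c - b) * X i + (a - c) * Y i + (b - a) * Z i|
      = |m * ((c - b) * X i + (a - c) * Y i + (b - a) * Z i)| := by
        rw [abs_mul, abs_of_pos hm]
    _ = |(c - b) * (A - m * X i) + (a - c) * (B - m * Y i) + (b - a) * (C - m * Z i)| := by
        rw [← abs_neg]
        congr 1
        linear_combination -hmom
    _ ≤ |(c - b) * (A - m * X i)| + |(a - c) * (B - m * Y i)| + |(b - a) * (C - m * Z i)| :=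
        abs_add_three _ _ _
    _ ≤ |c - b| * (ε * m) + |a - c| * (ε * m) + |b - a| * (ε * m) := by
        simp_rw [abs_mul]
        gcongr
    _ = m * (ε * (|c - b| + |a - c| + |b - a|)) := by ring

end windows


open Set Topology

/-! ### Tubes around the curve -/

/-- An open tube around the image of `γ`, carrying a continuous parameter `σ` with values in `I` for
which the times of `γ (σ p)` and `p` are close. Since `γ` is an embedding of an interval, its image
is closed in an open set `W`, and the Tietze extension theorem extends `γ⁻¹` from the image to
`W`. -/
lemma exists_tube {I : Set ℝ} (hIopen : IsOpen I) (hIconn : I.OrdConnected)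
    (hInonempty : I.Nonempty) {γ : ℝ → Spacetime} (hγ : ContinuousOn γ I)
    (hemb : IsEmbedding fun s : I => γ s) {η : ℝ} (hη : 0 < η) :
    ∃ (O : Set Spacetime) (σ : Spacetime → ℝ), IsOpen O ∧ γ '' I ⊆ O ∧ ContinuousOn σ O ∧
      ∀ p ∈ O, σ p ∈ I ∧ |γ (σ p) 0 - p 0| < η := by
  have hlc : ∀ x ∈ γ '' I, ∃ U ∈ 𝓝 x, IsClosed ((↑) ⁻¹' (γ '' I) : Set U) := by
    rintro _ ⟨s, hs, rfl⟩
    obtain ⟨δ, hδ, hball⟩ := Metric.isOpen_iff.1 hIopen s hs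
    have hsub : Icc (s - δ / 2) (s + δ / 2) ⊆ I := by
      intro r hr
      refine hball ?_
      rw [Metric.mem_ball, Real.dist_eq, abs_lt]
      constructor <;> linarith [hr.1, hr.2]
    have hJ : IsOpen ((↑) ⁻¹' Ioo (s - δ / 2) (s + δ / 2) : Set I) :=
      isOpen_Ioo.preimage continuous_subtype_val
    obtain ⟨N, hN, hNJ⟩ := hemb.isInducing.isOpen_iff.1 hJ
    have hmem : ∀ r (hr : r ∈ I), γ r ∈ N ↔ r ∈ Ioo (s - δ / 2) (s + δ / 2) := fun r hr =>
      Set.ext_iff.1 hNJ ⟨r, hr⟩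
    refine ⟨N, hN.mem_nhds ((hmem s hs).2 ⟨by linarith, by linarith⟩), ?_⟩
    have heq : ((↑) ⁻¹' (γ '' I) : Set N) =
        (↑) ⁻¹' (γ '' Icc (s - δ / 2) (s + δ / 2)) := by
      ext ⟨p, hp⟩
      constructor
      · rintro ⟨r, hr, rfl⟩
        exact ⟨r, Ioo_subset_Icc_self ((hmem r hr).1 hp), rfl⟩
      · rintro ⟨r, hr, rfl⟩
        exact ⟨r, hsub hr, rfl⟩
    rw [heq]
    exact (isCompact_Icc.image_of_continuousOn (hγ.mono hsub)).isClosed.preimage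
      continuous_subtype_val
  -- The coborder is the largest open set in which the image is closed.
  have hloc : IsLocallyClosed (γ '' I) := ((isLocallyClosed_tfae _).out 0 2).2 hlc
  set W := coborder (γ '' I) with hW
  have hWo : IsOpen W := hloc.isOpen_coborder
  have hsubW : ∀ s : I, γ s ∈ W := fun s => subset_coborder ⟨s, s.2, rfl⟩
  let e : I → W := fun s => ⟨γ s, hsubW s⟩
  have he : IsClosedEmbedding e := by
    refine ⟨hemb.codRestrict W hsubW, ?_⟩
    have : range e = (↑) ⁻¹' (γ '' I) := by
      ext ⟨p, hp⟩
      constructor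
      · rintro ⟨s, hs⟩
        exact ⟨s, s.2, congrArg Subtype.val hs⟩
      · rintro ⟨s, hs, h⟩
        exact ⟨⟨s, hs⟩, Subtype.ext h⟩
    rw [this]
    exact isClosed_preimage_val_coborder
  obtain ⟨g, hgI, hge⟩ := ContinuousMap.exists_extension_forall_mem_of_isClosedEmbedding
    (⟨Subtype.val, continuous_subtype_val⟩ : C(I, ℝ)) (t := I) (fun s => s.2) hInonempty he
  set σ : Spacetime → ℝ := Function.extend (Subtype.val : W → Spacetime) g 0 with hσ
  have hσW : ∀ p : W, σ p = g p := fun p => Subtype.val_injective.extend_apply _ _ _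
  have hσc : ContinuousOn σ W := by
    rw [continuousOn_iff_continuous_domRestrict]
    exact g.continuous.congr fun p => (hσW p).symm
  have hσI : ∀ p ∈ W, σ p ∈ I := fun p hp => by
    rw [hσW ⟨p, hp⟩]; exact hgI _
  have hσγ : ∀ s ∈ I, σ (γ s) = s := fun s hs => by
    rw [hσW ⟨γ s, hsubW ⟨s, hs⟩⟩]
    exact congrFun hge ⟨s, hs⟩
  have hfc : ContinuousOn (fun p => |γ (σ p) 0 - p 0|) W := by
    have h1 : ContinuousOn (fun p => γ (σ p) 0) W :=
      (continuous_apply 0).comp_continuousOn (hγ.comp hσc hσI)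
    exact (h1.sub (continuous_apply 0).continuousOn).abs
  refine ⟨W ∩ (fun p => |γ (σ p) 0 - p 0|) ⁻¹' Iio η, σ, hfc.isOpen_inter_preimage hWo isOpen_Iio,
    ?_, hσc.mono inter_subset_left, fun p hp => ⟨hσI p hp.1, hp.2⟩⟩
  rintro _ ⟨s, hs, rfl⟩
  refine ⟨hsubW ⟨s, hs⟩, ?_⟩
  simp [hσγ s hs, hη]

/-- The matter field `T` is supported in the open tube `O` with parameter `σ : O → I`, and the time
of a point of the tube is within `η` of the time of the corresponding point of the curve. (The
function `σ` is total; its values outside `O` are irrelevant.) -/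
structure InTube (I : Set ℝ) (γ : ℝ → Spacetime) (η : ℝ) (O : Set Spacetime)
    (σ : Spacetime → ℝ) (T : Spacetime → Fin 4 → Fin 4 → ℝ) : Prop where
  good : GoodField T
  ordConnected : I.OrdConnected
  continuousOn : ContinuousOn γ I
  isOpen : IsOpen O
  continuousOn_param : ContinuousOn σ O
  param_mem : ∀ p ∈ O, σ p ∈ I
  close : ∀ p ∈ O, |γ (σ p) 0 - p 0| < η
  support : tsupport T ⊆ O

section tube
variable {I : Set ℝ} {γ : ℝ → Spacetime} {η : ℝ} {O : Set Spacetime}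
  {σ : Spacetime → ℝ} {T : Spacetime → Fin 4 → Fin 4 → ℝ}

/-- Reversal of the parametrization. -/
lemma InTube.neg (h : InTube I γ η O σ T) :
    InTube (Neg.neg ⁻¹' I) (fun s => γ (-s)) η O (fun p => -σ p) T where
  good := h.good
  ordConnected := by
    refine ⟨fun a ha b hb c hc => ?_⟩
    exact h.ordConnected.out hb ha ⟨neg_le_neg hc.2, neg_le_neg hc.1⟩
  continuousOn := h.continuousOn.comp continuous_neg.continuousOn fun _ hs => hs
  isOpen := h.isOpen
  continuousOn_param := h.continuousOn_param.neg
  param_mem p hp := by simpa using h.param_mem p hp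
  close p hp := by simpa using h.close p hp
  support := h.support

lemma InTube.close_mul (h : InTube I γ η O σ T) {τ : ℝ} (hτ : τ = 1 ∨ τ = -1) {p : Spacetime}
    (hp : p ∈ O) : τ * p 0 < τ * γ (σ p) 0 + η ∧ τ * γ (σ p) 0 - η < τ * p 0 := by
  have := abs_lt.1 (h.close p hp)
  rcases hτ with rfl | rfl <;> constructor <;> linarith [this.1, this.2]

lemma InTube.isOpen_inter (h : InTube I γ η O σ T) {A : Set ℝ} (hA : IsOpen A) :
    IsOpen (O ∩ σ ⁻¹' A) :=
  h.continuousOn_param.isOpen_inter_preimage h.isOpen hA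

/-- If from time `c` on no matter sits at the parameters `a` and `b`, then from time `c` on there is
no matter at the parameters between them: time is bounded on the compact piece of the curve. -/
lemma InTube.interval_kill (h : InTube I γ η O σ T) {τ : ℝ} (hτ : τ = 1 ∨ τ = -1) {a b c : ℝ}
    (haI : a ∈ I) (hbI : b ∈ I) (ha : ∀ p ∈ tsupport T, c ≤ τ * p 0 → σ p ≠ a)
    (hb : ∀ p ∈ tsupport T, c ≤ τ * p 0 → σ p ≠ b) :
    ∀ p ∈ O, a < σ p → σ p < b → c < τ * p 0 → T p = 0 := by
  have hsub : Icc a b ⊆ I := h.ordConnected.out haI hbI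
  have hcont : ContinuousOn (fun s => τ * γ s 0) (Icc a b) :=
    continuousOn_const.mul ((continuous_apply 0).comp_continuousOn (h.continuousOn.mono hsub))
  obtain ⟨M, hM⟩ := (isCompact_Icc.image_of_continuousOn hcont).bddAbove
  have hk := kill h.good hτ (h.isOpen_inter (isOpen_Ioo (a := a) (b := b)))
    (h.isOpen_inter ((isOpen_Iio (a := a)).union (isOpen_Ioi (a := b)))) (c := c) (d := M + η) ?_ ?_ ?_
  · exact fun p hp h1 h2 => hk p ⟨hp, h1, h2⟩
  · rw [Set.disjoint_left]
    rintro p ⟨_, h1, h2⟩ ⟨_, h3 | h3⟩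
    · exact lt_asymm h1 h3
    · exact lt_asymm h2 h3
  · intro p hp hc
    have hpO := h.support hp
    rcases lt_or_gt_of_ne (ha p hp hc) with h1 | h1
    · exact Or.inr ⟨hpO, Or.inl h1⟩
    · rcases lt_or_gt_of_ne (hb p hp hc) with h2 | h2
      · exact Or.inl ⟨hpO, h1, h2⟩
      · exact Or.inr ⟨hpO, Or.inr h2⟩
  · rintro p ⟨hp, h1, h2⟩ _
    have := hM ⟨σ p, ⟨h1.le, h2.le⟩, rfl⟩
    linarith [(h.close_mul hτ hp).1]

/-- If the support avoids the parameter `s₀`, there is no matter at parameters beyond `s₀`. Either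
time is bounded below along that half of the curve, so that matter there would have no past, or the
curve later returns to a time before that of the given point and `interval_kill` applies. -/
lemma InTube.half_kill (h : InTube I γ η O σ T) {s₀ : ℝ} (hs₀ : s₀ ∈ I)
    (hcut : ∀ p ∈ tsupport T, σ p ≠ s₀) : ∀ p ∈ O, s₀ < σ p → T p = 0 := by
  intro p hp hsp
  by_cases hbd : ∃ M, ∀ s ∈ I, s₀ ≤ s → M ≤ γ s 0
  · obtain ⟨M, hM⟩ := hbd
    refine kill h.good (Or.inr rfl) (h.isOpen_inter (isOpen_Ioi (a := s₀)))
      (h.isOpen_inter (isOpen_Iio (a := s₀))) (c := -1 * p 0 - 1) (d := -M + η) ?_ ?_ ?_ p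
      ⟨hp, hsp⟩ (by linarith)
    · rw [Set.disjoint_left]
      rintro q ⟨_, h1⟩ ⟨_, h3⟩
      exact lt_asymm (show s₀ < σ q from h1) (show σ q < s₀ from h3)
    · intro q hq _
      rcases lt_or_gt_of_ne (hcut q hq) with h1 | h1
      · exact Or.inr ⟨h.support hq, h1⟩
      · exact Or.inl ⟨h.support hq, h1⟩
    · rintro q ⟨hq, h1⟩ _
      have := hM _ (h.param_mem q hq) (le_of_lt h1)
      linarith [(h.close_mul (Or.inr rfl) hq).1]
  · push Not at hbd
    have hsub : Icc s₀ (σ p) ⊆ I := h.ordConnected.out hs₀ (h.param_mem p hp)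
    have hcont : ContinuousOn (fun s => γ s 0) (Icc s₀ (σ p)) :=
      (continuous_apply 0).comp_continuousOn (h.continuousOn.mono hsub)
    obtain ⟨m, hm⟩ := (isCompact_Icc.image_of_continuousOn hcont).bddBelow
    obtain ⟨b, hbI, hsb, hb⟩ := hbd (min m (p 0 - 1 - η))
    have hpb : σ p < b := by
      by_contra hcon
      have := hm ⟨b, ⟨hsb, not_lt.1 hcon⟩, rfl⟩
      exact absurd (hb.trans_le (min_le_left _ _)) (not_lt.2 this)
    refine h.interval_kill (Or.inl rfl) hs₀ hbI (c := p 0 - 1) (fun q hq _ => hcut q hq) ?_ p hp hsp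
      hpb (by linarith)
    rintro q hq hc rfl
    have := (h.close_mul (Or.inl rfl) (h.support hq)).1
    linarith [hb.trans_le (min_le_right _ _)]

end tube

/-! ### The curve -/

/-- Every open neighbourhood of `Γ` contains the support of a nonzero matter field. -/
def HasMatter (Γ : Set Spacetime) : Prop :=
  ∀ O : Set Spacetime, IsOpen O → Γ ⊆ O →
    ∃ T, GoodField T ∧ tsupport T ⊆ O ∧ ∃ p, T p ≠ 0

section curve
variable {I : Set ℝ} {γ : ℝ → Spacetime}

/-- Time along the curve has no intermediate peak (`τ = 1`) or dip (`τ = -1`): in a narrow tube the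
matter near the top of a peak would have no future, hence the tube is cut at `s₀`, and then each of
its halves is empty of matter. -/
lemma no_dent (hIopen : IsOpen I) (hIconn : I.OrdConnected)
    (hγ : ContinuousOn γ I) (hemb : IsEmbedding fun s : I => γ s) (hm : HasMatter (γ '' I))
    {τ : ℝ} (hτ : τ = 1 ∨ τ = -1) {s₁ s₀ s₂ : ℝ} (h₁ : s₁ ∈ I) (h₀ : s₀ ∈ I) (h₂ : s₂ ∈ I)
    (h₁₀ : s₁ < s₀) (h₀₂ : s₀ < s₂) (hlt₁ : τ * γ s₁ 0 < τ * γ s₀ 0)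
    (hlt₂ : τ * γ s₂ 0 < τ * γ s₀ 0) : False := by
  set m := max (τ * γ s₁ 0) (τ * γ s₂ 0) with hmdef
  have hml := max_lt hlt₁ hlt₂
  set η := (τ * γ s₀ 0 - m) / 3 with hηdef
  have hη : 0 < η := by rw [hηdef]; linarith
  obtain ⟨O, σ, hO, hγO, hσ, hprop⟩ := exists_tube hIopen hIconn ⟨s₀, h₀⟩ hγ hemb hη
  obtain ⟨T, hT, hsupp, q, hq⟩ := hm O hO hγO
  have tube : InTube I γ η O σ T := ⟨hT, hIconn, hγ, hO, hσ, fun p hp => (hprop p hp).1,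
    fun p hp => (hprop p hp).2, hsupp⟩
  have hk := tube.interval_kill hτ h₁ h₂ (c := m + η)
    (by
      rintro p hp hc rfl
      linarith [(tube.close_mul hτ (hsupp hp)).1, le_max_left (τ * γ (σ p) 0) (τ * γ s₂ 0)])
    (by
      rintro p hp hc rfl
      linarith [(tube.close_mul hτ (hsupp hp)).1, le_max_right (τ * γ s₁ 0) (τ * γ (σ p) 0)])
  have hcut : ∀ p ∈ tsupport T, σ p ≠ s₀ := by
    intro p hp hps
    have hpO := hsupp hp
    have hc : m + η < τ * p 0 := by
      have := (tube.close_mul hτ hpO).2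
      rw [hps] at this
      linarith
    refine notMem_tsupport_iff_eventuallyEq.2 ?_ hp
    have ho : IsOpen {q : Spacetime | m + η < τ * q 0} := isOpen_lt continuous_const (by fun_prop)
    filter_upwards [(tube.isOpen_inter (isOpen_Ioo (a := s₁) (b := s₂))).mem_nhds
      ⟨hpO, by rw [mem_preimage, hps]; exact ⟨h₁₀, h₀₂⟩⟩, ho.mem_nhds hc] with r hr hr'
    exact hk r hr.1 hr.2.1 hr.2.2 hr'
  have hqs : q ∈ tsupport T := subset_tsupport T hq
  rcases lt_or_gt_of_ne (hcut q hqs) with h | h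
  · exact hq (tube.neg.half_kill (s₀ := -s₀) (by simpa using h₀)
      (fun p hp h => hcut p hp (neg_injective h)) q (hsupp hqs) (neg_lt_neg h))
  · exact hq (tube.half_kill h₀ hcut q (hsupp hqs) h)

/-- Matter that exists at some time exists for ever, so the curve reaches all times. -/
lemma time_unbounded (hm : HasMatter (γ '' I)) {τ : ℝ} (hτ : τ = 1 ∨ τ = -1) (t : ℝ) :
    ∃ s ∈ I, t < τ * γ s 0 := by
  by_contra! hcon
  obtain ⟨T, hT, hsupp, q, hq⟩ := hm {p | τ * p 0 < t + 1}
    (isOpen_lt (by fun_prop) continuous_const) (by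
      rintro _ ⟨s, hs, rfl⟩
      exact (hcon s hs).trans_lt (by linarith))
  exact hq (kill hT hτ isOpen_univ isOpen_empty (disjoint_empty _) (c := τ * q 0 - 1) (d := t + 1)
    (fun _ _ _ => Or.inl trivial) (fun p _ hp => le_of_lt (hsupp hp)) q trivial (by linarith))

/-- `s` is an end point (on at least one side) of the level set of the time along `γ`. -/
def IsLevelEnd (I : Set ℝ) (γ : ℝ → Spacetime) (s : ℝ) : Prop :=
  (∀ r ∈ I, s < r → γ s 0 < γ r 0) ∨ ∀ r ∈ I, r < s → γ r 0 < γ s 0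

/-- At an end point of a level set of the time there is a time interval, arbitrarily close to
`γ s 0`, during which the curve is near `γ s`. The interval need not contain `γ s 0`, since on the
other side of `s` the curve may stay at constant time. -/
lemma exists_window (hIopen : IsOpen I) (hγ : ContinuousOn γ I)
    (hmono : MonotoneOn (fun s => γ s 0) I) {s : ℝ} (hs : s ∈ I) (hend : IsLevelEnd I γ s)
    {ε : ℝ} (hε : 0 < ε) :
    ∃ u w, u < w ∧ |u - γ s 0| ≤ ε ∧ ∀ r ∈ I, u ≤ γ r 0 → γ r 0 ≤ w → ‖γ r - γ s‖ < ε := by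
  obtain ⟨δ₁, hδ₁, hball⟩ := Metric.isOpen_iff.1 hIopen s hs
  obtain ⟨δ₂, hδ₂, hcl⟩ := Metric.continuousOn_iff.1 hγ s hs ε hε
  set δ := min δ₁ δ₂ / 2 with hδdef
  have hδ : 0 < δ := half_pos (lt_min hδ₁ hδ₂)
  have hδl₁ : δ < δ₁ := (half_lt_self (lt_min hδ₁ hδ₂)).trans_le (min_le_left _ _)
  have hδl₂ : δ < δ₂ := (half_lt_self (lt_min hδ₁ hδ₂)).trans_le (min_le_right _ _)
  have hnear : ∀ r ∈ I, |r - s| ≤ δ → ‖γ r - γ s‖ < ε := fun r hr h => by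
    rw [← dist_eq_norm]
    exact hcl r hr (by rw [Real.dist_eq]; linarith)
  have htime : ∀ r ∈ I, |r - s| ≤ δ → |γ r 0 - γ s 0| < ε := fun r hr h =>
    (norm_le_pi_norm (γ r - γ s) 0).trans_lt (hnear r hr h)
  rcases hend with hend | hend
  · have hr : s + δ ∈ I := hball (by simp [abs_of_pos hδ, hδl₁])
    have hgap := hend _ hr (by linarith)
    have hc := abs_lt.1 (htime _ hr (by simp [abs_of_pos hδ]))
    -- The middle third of the times taken on `[s, s + δ]`.
    refine ⟨(2 * γ s 0 + γ (s + δ) 0) / 3, (γ s 0 + 2 * γ (s + δ) 0) / 3, by linarith, ?_, ?_⟩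
    · rw [abs_le]; constructor <;> linarith
    · intro r hrI h1 h2
      have hl : s < r := by
        by_contra hcon
        have : γ r 0 ≤ γ s 0 := hmono hrI hs (not_lt.1 hcon)
        linarith
      have hu : r < s + δ := by
        by_contra hcon
        have : γ (s + δ) 0 ≤ γ r 0 := hmono hr hrI (not_lt.1 hcon)
        linarith
      exact hnear r hrI (by rw [abs_le]; constructor <;> linarith)
  · have hr : s - δ ∈ I := hball (by simp [abs_of_pos hδ, hδl₁])
    have hgap := hend _ hr (by linarith)
    have hc := abs_lt.1 (htime _ hr (by simp [abs_of_pos hδ]))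
    refine ⟨(γ s 0 + 2 * γ (s - δ) 0) / 3, (2 * γ s 0 + γ (s - δ) 0) / 3, by linarith, ?_, ?_⟩
    · rw [abs_le]; constructor <;> linarith
    · intro r hrI h1 h2
      have hl : r < s := by
        by_contra hcon
        have : γ s 0 ≤ γ r 0 := hmono hs hrI (not_lt.1 hcon)
        linarith
      have hu : s - δ < r := by
        by_contra hcon
        have : γ r 0 ≤ γ (s - δ) 0 := hmono hrI hr (not_lt.1 hcon)
        linarith
      exact hnear r hrI (by rw [abs_le]; constructor <;> linarith)

/-- Over three end points of level sets the position along the curve is an affine function of the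
time. The relation is written without division; it says nothing if all three times agree, and forces
two positions to agree if exactly two times do. It is the limit `ε → 0` of `three_windows`, applied
to matter close to the curve in time windows near the three points. -/
lemma collinear_levelEnds (hIopen : IsOpen I) (hγ : ContinuousOn γ I) (hm : HasMatter (γ '' I))
    (hmono : MonotoneOn (fun s => γ s 0) I) {a b c : ℝ} (ha : a ∈ I) (hb : b ∈ I) (hc : c ∈ I)
    (hae : IsLevelEnd I γ a) (hbe : IsLevelEnd I γ b) (hce : IsLevelEnd I γ c) (i : Fin 4) :
    (γ c 0 - γ b 0) * γ a i + (γ a 0 - γ c 0) * γ b i + (γ b 0 - γ a 0) * γ c i = 0 := by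
  by_cases hi : i = 0
  · subst hi; ring
  have key : ∀ n : ℕ, ∃ u v w : ℝ, |u - γ a 0| ≤ 1 / ((n : ℝ) + 1) ∧
      |v - γ b 0| ≤ 1 / ((n : ℝ) + 1) ∧ |w - γ c 0| ≤ 1 / ((n : ℝ) + 1) ∧
      |(w - v) * γ a i + (u - w) * γ b i + (v - u) * γ c i| ≤
        1 / ((n : ℝ) + 1) * (|w - v| + |u - w| + |v - u|) := by
    intro n
    have hε : 0 < 1 / ((n : ℝ) + 1) := Nat.one_div_pos_of_nat
    set ε := 1 / ((n : ℝ) + 1)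
    obtain ⟨u, u', hu, hua, hun⟩ := exists_window hIopen hγ hmono ha hae hε
    obtain ⟨v, v', hv, hvb, hvn⟩ := exists_window hIopen hγ hmono hb hbe hε
    obtain ⟨w, w', hw, hwc, hwn⟩ := exists_window hIopen hγ hmono hc hce hε
    -- An open set that is thin around `X` during the times `[u, u']` and unrestricted otherwise.
    let S : ℝ → ℝ → Spacetime → Set Spacetime := fun u u' X =>
      {p | p 0 < u} ∪ {p | u' < p 0} ∪ {p | ‖p - X‖ < ε}
    have hS : ∀ u u' X, IsOpen (S u u' X) := fun u u' X =>
      ((isOpen_lt (continuous_apply 0) continuous_const).union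
        (isOpen_lt continuous_const (continuous_apply 0))).union
        (isOpen_lt (by fun_prop) continuous_const)
    have hSγ : ∀ u u' X, (∀ r ∈ I, u ≤ γ r 0 → γ r 0 ≤ u' → ‖γ r - X‖ < ε) →
        γ '' I ⊆ S u u' X := by
      rintro u u' X h _ ⟨r, hr, rfl⟩
      by_cases h1 : γ r 0 < u
      · exact Or.inl (Or.inl h1)
      by_cases h2 : u' < γ r 0
      · exact Or.inl (Or.inr h2)
      exact Or.inr (h r hr (not_lt.1 h1) (not_lt.1 h2))
    obtain ⟨T, hT, hsupp, q, hq⟩ := hm (S u u' (γ a) ∩ S v v' (γ b) ∩ S w w' (γ c))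
      (((hS _ _ _).inter (hS _ _ _)).inter (hS _ _ _))
      (subset_inter (subset_inter (hSγ _ _ _ hun) (hSγ _ _ _ hvn)) (hSγ _ _ _ hwn))
    have hSn : ∀ u u' X p δ, p ∈ S u u' X → 2 * δ ≤ u' - u → u ≤ p 0 → p 0 ≤ u + 2 * δ →
        ‖p - X‖ ≤ ε := by
      rintro u u' X p δ ((h | h) | h) h1 h2 h3
      · exact absurd h2 (not_le.2 h)
      · exact absurd (show u' < p 0 from h) (by linarith)
      · exact le_of_lt h
    set d := min (min (u' - u) (v' - v)) (w' - w)
    have hd : 0 < d := lt_min (lt_min (by linarith) (by linarith)) (by linarith)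
    have hd1 : d ≤ u' - u := (min_le_left _ _).trans (min_le_left _ _)
    have hd2 : d ≤ v' - v := (min_le_left _ _).trans (min_le_right _ _)
    have hd3 : d ≤ w' - w := min_le_right _ _
    exact ⟨u, v, w, hua, hvb, hwc, three_windows hT hq (half_pos hd)
      (fun p hp => hSn _ _ _ p _ (hsupp hp).1.1 (by linarith))
      (fun p hp => hSn _ _ _ p _ (hsupp hp).1.2 (by linarith))
      (fun p hp => hSn _ _ _ p _ (hsupp hp).2 (by linarith)) hi⟩
  choose u v w hu hv hw hE using key
  have hlim : Filter.Tendsto (fun n : ℕ => 1 / ((n : ℝ) + 1)) Filter.atTop (𝓝 0) :=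
    tendsto_one_div_add_atTop_nhds_zero_nat
  have conv : ∀ (x : ℕ → ℝ) (y : ℝ), (∀ n : ℕ, |x n - y| ≤ 1 / ((n : ℝ) + 1)) →
      Filter.Tendsto x Filter.atTop (𝓝 y) := fun x y h =>
    tendsto_iff_norm_sub_tendsto_zero.2 (squeeze_zero (fun _ => norm_nonneg _) h hlim)
  have hu' := conv u _ hu
  have hv' := conv v _ hv
  have hw' := conv w _ hw
  have hL := ((((hw'.sub hv').mul_const (γ a i)).add ((hu'.sub hw').mul_const (γ b i))).add
    ((hv'.sub hu').mul_const (γ c i))).abs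
  have hR := hlim.mul (((hw'.sub hv').abs.add (hu'.sub hw').abs).add (hv'.sub hu').abs)
  have := le_of_tendsto_of_tendsto' hL hR hE
  rw [zero_mul] at this
  exact abs_nonpos_iff.1 this

/-- The level sets of the time along the curve are nonempty and compact, so their end points are
attained. -/
lemma exists_level_ends (hIconn : I.OrdConnected) (hγ : ContinuousOn γ I)
    (hm : HasMatter (γ '' I)) (hmono : MonotoneOn (fun s => γ s 0) I) (t : ℝ) :
    ∃ a ∈ I, ∃ b ∈ I, γ a 0 = t ∧ γ b 0 = t ∧ ∀ s ∈ I, γ s 0 = t → a ≤ s ∧ s ≤ b := by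
  obtain ⟨lo, hlo, hlot⟩ := time_unbounded hm (Or.inr rfl) (-t)
  obtain ⟨hi, hhi, hhit⟩ := time_unbounded hm (Or.inl rfl) t
  have hmem : ∀ s ∈ I, γ s 0 = t → s ∈ Icc lo hi := by
    intro s hs hst
    constructor
    · by_contra hcon
      have : γ s 0 ≤ γ lo 0 := hmono hs hlo (le_of_not_ge hcon)
      linarith
    · by_contra hcon
      have : γ hi 0 ≤ γ s 0 := hmono hhi hs (le_of_not_ge hcon)
      linarith
  have hle : lo ≤ hi := by
    by_contra hcon
    have : γ hi 0 ≤ γ lo 0 := hmono hhi hlo (le_of_not_ge hcon)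
    linarith
  have hsub : Icc lo hi ⊆ I := hIconn.out hlo hhi
  have hcont : ContinuousOn (fun s => γ s 0) (Icc lo hi) :=
    (continuous_apply 0).comp_continuousOn (hγ.mono hsub)
  have hK : IsCompact (Icc lo hi ∩ (fun s => γ s 0) ⁻¹' {t}) :=
    isCompact_Icc.of_isClosed_subset
      (hcont.preimage_isClosed_of_isClosed isClosed_Icc isClosed_singleton) inter_subset_left
  obtain ⟨s, hs, hst⟩ := intermediate_value_Icc hle hcont
    (show t ∈ Icc (γ lo 0) (γ hi 0) from ⟨by linarith, by linarith⟩)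
  obtain ⟨a, ha, ha'⟩ := hK.exists_isLeast ⟨s, hs, hst⟩
  obtain ⟨b, hb, hb'⟩ := hK.exists_isGreatest ⟨s, hs, hst⟩
  exact ⟨a, hsub ha.1, b, hsub hb.1, ha.2, hb.2, fun s hs hst =>
    ⟨ha' ⟨hmem s hs hst, hst⟩, hb' ⟨hmem s hs hst, hst⟩⟩⟩

/-- A curve of nondecreasing time that is followed by matter lies on a timelike line. The two end
points of a level set of the time coincide, by collinearity with a point at a later time, so time is
injective along the curve and collinearity holds for all triples of points. -/
lemma line_of_monotone (hIopen : IsOpen I) (hIconn : I.OrdConnected) (hInonempty : I.Nonempty)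
    (hγ : ContinuousOn γ I) (hinj : InjOn γ I) (hm : HasMatter (γ '' I))
    (hmono : MonotoneOn (fun s => γ s 0) I) :
    ∃ p v : Spacetime, v 0 ≠ 0 ∧ γ '' I ⊆ {q : Spacetime | ∃ s : ℝ, q = p + s • v} := by
  have hleft : ∀ a ∈ I, (∀ s ∈ I, γ s 0 = γ a 0 → a ≤ s) → IsLevelEnd I γ a := by
    intro a ha h
    refine Or.inr fun r hr hra => lt_of_le_of_ne (hmono hr ha hra.le) fun he => ?_
    exact absurd (h r hr he) (not_le.2 hra)
  have hright : ∀ a ∈ I, (∀ s ∈ I, γ s 0 = γ a 0 → s ≤ a) → IsLevelEnd I γ a := by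
    intro a ha h
    refine Or.inl fun r hr hra => lt_of_le_of_ne (hmono ha hr hra.le) fun he => ?_
    exact absurd (h r hr he.symm) (not_le.2 hra)
  have hinj0 : ∀ r ∈ I, ∀ s ∈ I, γ r 0 = γ s 0 → r = s := by
    intro r hr s hs hrs
    obtain ⟨a, ha, b, hb, hat, hbt, hab⟩ := exists_level_ends hIconn hγ hm hmono (γ s 0)
    obtain ⟨c, hc, d, -, hct, -, hc'⟩ := exists_level_ends hIconn hγ hm hmono (γ s 0 + 1)
    have hcol := collinear_levelEnds hIopen hγ hm hmono ha hb hc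
      (hleft a ha fun s hs h => (hab s hs (h.trans hat)).1)
      (hright b hb fun s hs h => (hab s hs (h.trans hbt)).2)
      (hleft c hc fun s hs h => (hc' s hs (h.trans hct)).1)
    have hγab : γ a = γ b := by
      funext i
      have := hcol i
      rw [hat, hbt, hct] at this
      linarith
    have := hinj ha hb hγab
    subst this
    have h1 := hab r hr hrs
    have h2 := hab s hs rfl
    linarith [h1.1, h1.2, h2.1, h2.2]
  have hend : ∀ s ∈ I, IsLevelEnd I γ s := fun s hs =>
    hleft s hs fun r hr h => (hinj0 r hr s hs h).ge
  obtain ⟨s₀, h₀⟩ := hInonempty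
  obtain ⟨s₁, h₁, hlt⟩ := time_unbounded hm (Or.inl rfl) (γ s₀ 0)
  have hne : γ s₁ 0 - γ s₀ 0 ≠ 0 := by linarith
  refine ⟨γ s₀, γ s₁ - γ s₀, hne, ?_⟩
  rintro _ ⟨s, hs, rfl⟩
  refine ⟨(γ s 0 - γ s₀ 0) / (γ s₁ 0 - γ s₀ 0), ?_⟩
  funext i
  have := collinear_levelEnds hIopen hγ hm hmono h₀ h₁ hs (hend _ h₀) (hend _ h₁) (hend _ hs) i
  simp only [Pi.add_apply, Pi.smul_apply, Pi.sub_apply, smul_eq_mul]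
  field_simp
  linear_combination this

end curve

/-- Geodesic theorem in flat Newtonian spacetime: a smooth imbedded curve about
which arbitrarily small conserved matter fields satisfying the mass condition
can propagate is timelike and lies on an affine line with timelike direction. -/
theorem geodesic_theorem (I : Set ℝ) (hIopen : IsOpen I) (hIconn : I.OrdConnected)
    (hInonempty : I.Nonempty) (γ : ℝ → Spacetime)
    (hsmooth : ContDiffOn ℝ (⊤ : ℕ∞) γ I) (hinj : Set.InjOn γ I)
    (hreg : ∀ s ∈ I, deriv γ s ≠ 0)
    (hemb : Topology.IsEmbedding fun s : I => γ s)
    (hmatter : ∀ O : Set Spacetime, IsOpen O → γ '' I ⊆ O →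
      ∃ T : Spacetime → Fin 4 → Fin 4 → ℝ,
        IsMassMomentum T ∧ MassCond T ∧ ConservationCond T ∧ SlabCompact T ∧
        tsupport T ⊆ O ∧ ∃ p ∈ O, T p ≠ 0) :
    (∀ s ∈ I, deriv γ s 0 ≠ 0) ∧
    ∃ p v : Spacetime, v 0 ≠ 0 ∧ γ '' I ⊆ {q : Spacetime | ∃ s : ℝ, q = p + s • v} := by
  have hγ : ContinuousOn γ I := hsmooth.continuousOn
  have hm : HasMatter (γ '' I) := by
    intro O hO hsub
    obtain ⟨T, h1, h2, h3, h4, h5, p, -, hp⟩ := hmatter O hO hsub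
    exact ⟨T, ⟨h1, h2, h3, h4⟩, h5, p, hp⟩
  have hline : ∃ p v : Spacetime, v 0 ≠ 0 ∧
      γ '' I ⊆ {q : Spacetime | ∃ s : ℝ, q = p + s • v} := by
    by_cases hmono : MonotoneOn (fun s => γ s 0) I
    · exact line_of_monotone hIopen hIconn hInonempty hγ hinj hm hmono
    by_cases hanti : AntitoneOn (fun s => γ s 0) I
    · have himg : (fun s => γ (-s)) '' (Neg.neg ⁻¹' I) = γ '' I := by
        ext q
        constructor
        · rintro ⟨s, hs, rfl⟩
          exact ⟨-s, hs, rfl⟩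
        · rintro ⟨s, hs, rfl⟩
          exact ⟨-s, by simpa using hs, by simp⟩
      rw [← himg] at hm ⊢
      refine line_of_monotone (hIopen.preimage continuous_neg) ?_ ?_
        (hγ.comp continuous_neg.continuousOn fun _ hs => hs) ?_ hm ?_
      · exact ⟨fun a ha b hb c hc => hIconn.out hb ha ⟨neg_le_neg hc.2, neg_le_neg hc.1⟩⟩
      · obtain ⟨s, hs⟩ := hInonempty
        exact ⟨-s, by simpa using hs⟩
      · exact fun a ha b hb h => neg_injective (hinj ha hb h)
      · exact fun a ha b hb h => hanti hb ha (neg_le_neg h)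
    · exfalso
      obtain ⟨a, ha, b, hb, c, hc, hab, hbc, h | h⟩ :=
        Set.not_monotoneOn_not_antitoneOn_iff_exists_lt_lt.1 ⟨hmono, hanti⟩
      · exact no_dent hIopen hIconn hγ hemb hm (Or.inl rfl) ha hb hc hab hbc
          (by linarith [h.1]) (by linarith [h.2])
      · exact no_dent hIopen hIconn hγ hemb hm (Or.inr rfl) ha hb hc hab hbc
          (by linarith [h.1]) (by linarith [h.2])
  refine ⟨?_, hline⟩
  obtain ⟨p, v, hv, hsub⟩ := hline
  intro s hs h0
  have hdiff : DifferentiableAt ℝ γ s :=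
    (hsmooth.contDiffAt (hIopen.mem_nhds hs)).differentiableAt (by simp)
  have hd0 : HasDerivAt (fun r => γ r 0) 0 s := h0 ▸ hasDerivAt_pi.1 hdiff.hasDerivAt 0
  -- On a timelike line the spatial velocity is proportional to the time component, so a zero of
  -- the latter would be a zero of the whole derivative.
  have heq : γ =ᶠ[𝓝 s] fun r => p + ((γ r 0 - p 0) / v 0) • v := by
    filter_upwards [hIopen.mem_nhds hs] with r hr
    obtain ⟨k, hk⟩ := hsub ⟨r, hr, rfl⟩
    have : (γ r 0 - p 0) / v 0 = k := by
      rw [hk]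
      simp [hv]
    rw [this]
    exact hk
  have hd : HasDerivAt (fun r => p + ((γ r 0 - p 0) / v 0) • v) 0 s := by
    simpa using (((hd0.sub_const (p 0)).div_const (v 0)).smul_const v).const_add p
  exact hreg s hs (heq.deriv_eq.trans hd.deriv)

end
end

section
/- Equivalence of geodesic motion and Newton's second law: let φ : ℝ⁴ → ℝ be smooth and let Γ be the Newtonian connection associated with φ. Let x : ℝ → ℝ³ be a smooth curve and define γ : ℝ → ℝ⁴ by γ(s) = (s, x(s)). Then γ satisfies the geodesic equation of Γ, namely γ̈^a(s) + ∑_{b,c} Γ^a_{bc}(γ(s)) γ̇^b(s) γ̇^c(s) = 0 for all s and all a ∈ {0,1,2,3}, if and only if ẍ^i(s) = −(∂_i φ)(γ(s)) for all s and all i ∈ {1,2,3}. -/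
noncomputable section

/-- Partial derivative ∂ₐ f at p. -/
def pd (f : Spacetime → ℝ) (a : Fin 4) (p : Spacetime) : ℝ :=
  fderiv ℝ f p (Pi.single a 1)

/-- The temporal covector tₐ = δₐ⁰. -/
def tcov (a : Fin 4) : ℝ := if a = 0 then 1 else 0

/-- The field G: G⁰ = 0 and Gⁱ = ∂ᵢφ for the spatial indices. -/
def Gfield (φ : Spacetime → ℝ) (p : Spacetime) (a : Fin 4) : ℝ :=
  if a = 0 then 0 else pd φ a p

/-- Christoffel symbols of the Newtonian connection: Γ^a_{bc} = G^a t_b t_c. -/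
def Chr (φ : Spacetime → ℝ) (p : Spacetime) (a b c : Fin 4) : ℝ :=
  Gfield φ p a * tcov b * tcov c

/-- Equivalence of geodesic motion for the Newtonian connection and Newton's
second law ẍ = −∇φ. -/
theorem geodesic_iff_newton (φ : Spacetime → ℝ) (hφ : ContDiff ℝ (⊤ : ℕ∞) φ)
    (x : ℝ → Space) (hx : ContDiff ℝ (⊤ : ℕ∞) x)
    (γ : ℝ → Spacetime) (hγ : ∀ s : ℝ, γ s = pt s (x s)) :
    (∀ (s : ℝ) (a : Fin 4),
      deriv (deriv fun u => γ u a) s +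
        ∑ b : Fin 4, ∑ c : Fin 4,
          Chr φ (γ s) a b c * deriv (fun u => γ u b) s * deriv (fun u => γ u c) s = 0)
    ↔
    (∀ (s : ℝ) (i : Fin 3),
      deriv (deriv fun u => x u i) s = - pd φ i.succ (γ s)) := by
  have h0 : (fun u => γ u 0) = fun u => u := by
    funext u
    simp [hγ, pt]
  have hS : ∀ i : Fin 3, (fun u => γ u i.succ) = fun u => x u i := by
    intro i
    funext u
    simp [hγ, pt]
  -- Only the `b = c = 0` term survives, and it carries the factor `(γ̇⁰)² = 1`.
  have hsum : ∀ (s : ℝ) (a : Fin 4), ∑ b : Fin 4, ∑ c : Fin 4,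
      Chr φ (γ s) a b c * deriv (fun u => γ u b) s * deriv (fun u => γ u c) s =
        Gfield φ (γ s) a := by
    intro s a
    simp [Chr, tcov, h0]
  simp only [hsum, Fin.forall_fin_succ (n := 3), h0, hS]
  simp [Gfield, eq_neg_iff_add_eq_zero]

end
end

section
/- Curvature of the Newtonian connection: let φ : ℝ⁴ → ℝ be smooth and let Γ be the Newtonian connection associated with φ. Then its Riemann curvature tensor is given at every point by R^a{}_{bcd} = (∂_c G^a) t_b t_d − (∂_d G^a) t_b t_c, for all indices a, b, c, d ∈ {0,1,2,3}; in particular all quadratic terms ∑_e (Γ^a_{ce} Γ^e_{bd} − Γ^a_{de} Γ^e_{bc}) vanish identically. -/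
/-!
The curvature of the Newtonian connection is linear in `G`: the quadratic terms contract `t` with
`G`, and `t_e G^e = 0` because `t` is purely temporal and `G` purely spatial (`chr_mul_chr`). In the
remaining derivative terms the constant covector `t` factors out (`pd_mul_tcov`).
-/

noncomputable section

/-- The Riemann curvature tensor of the Newtonian connection:
R^a_{bcd} = ∂_c Γ^a_{bd} − ∂_d Γ^a_{bc} + ∑ₑ (Γ^a_{ce} Γ^e_{bd} − Γ^a_{de} Γ^e_{bc}). -/
def Riemann (φ : Spacetime → ℝ) (p : Spacetime) (a b c d : Fin 4) : ℝ :=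
  pd (fun q => Chr φ q a b d) c p - pd (fun q => Chr φ q a b c) d p +
    ∑ e : Fin 4, (Chr φ p a c e * Chr φ p e b d - Chr φ p a d e * Chr φ p e b c)

/-- The covector `tcov` is constant, so it factors out of partial derivatives. Its components being
`0` or `1`, no differentiability of `f` is needed. -/
theorem pd_mul_tcov (f : Spacetime → ℝ) (b d c : Fin 4) (p : Spacetime) :
    pd (fun q => f q * tcov b * tcov d) c p = pd f c p * tcov b * tcov d := by
  unfold tcov pd
  split_ifs <;> simp

/-- A product of two Christoffel symbols contracted over `e` contains the factor
`tcov e * Gfield φ p e`, which is zero since the gradient `G` is purely spatial. -/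
theorem chr_mul_chr (φ : Spacetime → ℝ) (p : Spacetime) (a b c d e : Fin 4) :
    Chr φ p a c e * Chr φ p e b d = 0 := by
  unfold Chr Gfield tcov
  by_cases he : e = 0 <;> simp [he]

/-- Curvature of the Newtonian connection:
R^a_{bcd} = (∂_c G^a) t_b t_d − (∂_d G^a) t_b t_c, the quadratic terms vanishing. -/
theorem newtonian_curvature (φ : Spacetime → ℝ) (hφ : ContDiff ℝ (⊤ : ℕ∞) φ) :
    (∀ (p : Spacetime) (a b c d : Fin 4),
      Riemann φ p a b c d =
        pd (fun q => Gfield φ q a) c p * tcov b * tcov d -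
        pd (fun q => Gfield φ q a) d p * tcov b * tcov c) ∧
    (∀ (p : Spacetime) (a b c d : Fin 4),
      ∑ e : Fin 4, (Chr φ p a c e * Chr φ p e b d - Chr φ p a d e * Chr φ p e b c) = 0) := by
  have quad : ∀ (p : Spacetime) (a b c d : Fin 4),
      ∑ e : Fin 4, (Chr φ p a c e * Chr φ p e b d - Chr φ p a d e * Chr φ p e b c) = 0 := by
    intro p a b c d
    simp [chr_mul_chr]
  refine ⟨fun p a b c d => ?_, quad⟩
  rw [Riemann, quad, add_zero]
  unfold Chr
  rw [pd_mul_tcov (fun q => Gfield φ q a), pd_mul_tcov (fun q => Gfield φ q a)]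

end
end

section
/- Curvature conditions CC2 and CC3 for the Newtonian connection: let φ : ℝ⁴ → ℝ be smooth and let Γ be the Newtonian connection associated with φ, with Riemann tensor R^a{}_{bcd}. Let h = diag(0,1,1,1) be the spatial metric, used to raise indices. Then: (CC3) the doubly raised Riemann tensor vanishes, i.e., ∑_e h^{be} R^a{}_{ecd} = 0 for all a, b, c, d (hence R^{ab}{}_{cd} = 0); and (CC2) the tensor R^a{}_b{}^c{}_d := ∑_e h^{ce} R^a{}_{bed} satisfies R^a{}_b{}^c{}_d = R^c{}_d{}^a{}_b for all a, b, c, d, and equals t_b t_d · ∂^c ∂^a φ where ∂^a = ∑_e h^{ae} ∂_e. -/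
/-!
Since `G^a t_a = 0`, the terms quadratic in `Γ` vanish and the curvature is
`R^a_{bcd} = t_b (t_d ∂_c G^a - t_c ∂_d G^a)` (`Riemann_eq`). The metric `h` annihilates `t`
(`hmet_mul_tcov`), so raising the index `b` gives zero, which is CC3, and raising the index `c`
leaves only `t_b t_d ∂^c G^a = t_b t_d ∂^c ∂^a φ` (`RiemannMixed_eq`). The pair symmetry CC2 is
then the symmetry of the second derivative of the smooth function `φ` (`pdUp_pdUp_comm`).
-/

noncomputable section

/-- The (degenerate) spatial metric h^{ab} = diag(0,1,1,1). -/
def hmet (a b : Fin 4) : ℝ := if a = b ∧ a ≠ 0 then 1 else 0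

/-- The spatially raised gradient ∂^a f = ∑ₑ h^{ae} ∂ₑ f. -/
def pdUp (f : Spacetime → ℝ) (a : Fin 4) (p : Spacetime) : ℝ :=
  ∑ e : Fin 4, hmet a e * pd f e p

/-- The mixed-raised Riemann tensor R^a_b{}^c_d = ∑ₑ h^{ce} R^a_{bed}. -/
def RiemannMixed (φ : Spacetime → ℝ) (p : Spacetime) (a b c d : Fin 4) : ℝ :=
  ∑ e : Fin 4, hmet c e * Riemann φ p a b e d

/-- The raised gradient `∂^a φ` is the field `G^a`. -/
lemma pdUp_eq_Gfield (φ : Spacetime → ℝ) (a : Fin 4) (p : Spacetime) :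
    pdUp φ a p = Gfield φ p a := by
  fin_cases a <;> simp [pdUp, Gfield, hmet]

lemma differentiable_pd {φ : Spacetime → ℝ} (hφ : ContDiff ℝ (⊤ : ℕ∞) φ) (a : Fin 4) :
    Differentiable ℝ (fun q => pd φ a q) := by
  have h : Differentiable ℝ (fderiv ℝ φ) :=
    (hφ.fderiv_right (m := 1) (by norm_cast)).differentiable (by norm_num)
  intro q
  exact (h q).clm_apply (differentiableAt_const _)

lemma differentiable_Gfield {φ : Spacetime → ℝ} (hφ : ContDiff ℝ (⊤ : ℕ∞) φ) (a : Fin 4) :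
    Differentiable ℝ (fun q => Gfield φ q a) := by
  unfold Gfield
  split_ifs
  · exact differentiable_const _
  · exact differentiable_pd hφ a

lemma pd_pd_comm {φ : Spacetime → ℝ} (hφ : ContDiff ℝ (⊤ : ℕ∞) φ) (a c : Fin 4)
    (p : Spacetime) :
    pd (fun q => pd φ a q) c p = pd (fun q => pd φ c q) a p := by
  have h : Differentiable ℝ (fderiv ℝ φ) :=
    (hφ.fderiv_right (m := 1) (by norm_cast)).differentiable (by norm_num)
  have key : ∀ a c : Fin 4, pd (fun q => pd φ a q) c p =
      fderiv ℝ (fderiv ℝ φ) p (Pi.single c 1) (Pi.single a 1) := by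
    intro a c
    unfold pd
    rw [fderiv_clm_apply (h p) (differentiableAt_const _)]
    simp
  have hs : IsSymmSndFDerivAt ℝ φ p :=
    hφ.contDiffAt.isSymmSndFDerivAt (by simp; norm_cast)
  rw [key, key, hs.eq]

lemma pd_Chr {φ : Spacetime → ℝ} (hφ : ContDiff ℝ (⊤ : ℕ∞) φ) (a b c d : Fin 4)
    (p : Spacetime) :
    pd (fun q => Chr φ q a b c) d p =
      pd (fun q => Gfield φ q a) d p * tcov b * tcov c := by
  have h := differentiable_Gfield hφ a p
  unfold pd Chr
  rw [fderiv_mul_const (h.mul_const _), fderiv_mul_const h]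
  simp
  ring

/-- Closed form of the curvature. The part quadratic in `Γ` drops out because `t_e G^e = 0`. -/
lemma Riemann_eq {φ : Spacetime → ℝ} (hφ : ContDiff ℝ (⊤ : ℕ∞) φ) (a b c d : Fin 4)
    (p : Spacetime) :
    Riemann φ p a b c d = tcov b * (tcov d * pd (fun q => Gfield φ q a) c p -
      tcov c * pd (fun q => Gfield φ q a) d p) := by
  have hG : ∀ e, tcov e * Gfield φ p e = 0 := by
    intro e
    by_cases he : e = 0 <;> simp [tcov, Gfield, he]
  have hsum : ∑ e : Fin 4, (Chr φ p a c e * Chr φ p e b d - Chr φ p a d e * Chr φ p e b c)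
      = 0 := by
    refine Finset.sum_eq_zero fun e _ => ?_
    unfold Chr
    linear_combination (Gfield φ p a * tcov c * tcov b * tcov d -
      Gfield φ p a * tcov d * tcov b * tcov c) * hG e
  rw [Riemann, hsum, pd_Chr hφ, pd_Chr hφ]
  ring

lemma hmet_mul_tcov (b e : Fin 4) : hmet b e * tcov e = 0 := by
  by_cases he : e = 0
  · subst he
    by_cases hb : b = 0 <;> simp [hmet, hb]
  · simp [tcov, he]

lemma RiemannMixed_eq {φ : Spacetime → ℝ} (hφ : ContDiff ℝ (⊤ : ℕ∞) φ) (p : Spacetime)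
    (a b c d : Fin 4) :
    RiemannMixed φ p a b c d = tcov b * tcov d * pdUp (fun q => pdUp φ a q) c p := by
  simp only [pdUp_eq_Gfield φ a]
  rw [RiemannMixed, pdUp, Finset.mul_sum]
  refine Finset.sum_congr rfl fun e _ => ?_
  rw [Riemann_eq hφ]
  linear_combination (-tcov b * pd (fun q => Gfield φ q a) d p) * hmet_mul_tcov c e

lemma pdUp_pdUp_comm {φ : Spacetime → ℝ} (hφ : ContDiff ℝ (⊤ : ℕ∞) φ) (a c : Fin 4)
    (p : Spacetime) :
    pdUp (fun q => pdUp φ a q) c p = pdUp (fun q => pdUp φ c q) a p := by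
  simp only [pdUp_eq_Gfield]
  by_cases ha : a = 0 <;> by_cases hc : c = 0 <;>
    simp [Gfield, ha, hc, pd_pd_comm hφ a c]
  all_goals simp [pd]

/-- Curvature conditions CC3 and CC2 for the Newtonian connection:
∑ₑ h^{be} R^a_{ecd} = 0 (so R^{ab}_{cd} = 0), and R^a_b{}^c_d is symmetric under
exchange of index pairs and equals t_b t_d ∂^c ∂^a φ. -/
theorem newtonian_CC2_CC3 (φ : Spacetime → ℝ) (hφ : ContDiff ℝ (⊤ : ℕ∞) φ) :
    (∀ (p : Spacetime) (a b c d : Fin 4),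
      ∑ e : Fin 4, hmet b e * Riemann φ p a e c d = 0) ∧
    (∀ (p : Spacetime) (a b c d : Fin 4),
      RiemannMixed φ p a b c d = RiemannMixed φ p c d a b) ∧
    (∀ (p : Spacetime) (a b c d : Fin 4),
      RiemannMixed φ p a b c d = tcov b * tcov d * pdUp (fun q => pdUp φ a q) c p) := by
  refine ⟨fun p a b c d => ?_, fun p a b c d => ?_, fun p a b c d => RiemannMixed_eq hφ p a b c d⟩
  · refine Finset.sum_eq_zero fun e _ => ?_
    rw [Riemann_eq hφ]
    linear_combination (tcov d * pd (fun q => Gfield φ q a) c p -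
      tcov c * pd (fun q => Gfield φ q a) d p) * hmet_mul_tcov b e
  · rw [RiemannMixed_eq hφ, RiemannMixed_eq hφ, pdUp_pdUp_comm hφ]
    ring

end
end
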